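/- Let X be a Peano space with only finitely many maximal cyclic subsets, each of which is locally strongly contractible. Then X is locally strongly contractible. -/

import Mathlib

open Metric Set

/-- A Jordan curve: a subset homeomorphic to the circle. -/
def IsJordanCurve {X : Type} [TopologicalSpace X] (J : Set X) : Prop :=
  Nonempty (AddCircle (1 : ℝ) ≃ₜ J)

/-- A set is cyclicly connected if every pair of its points lies on a Jordan curve in it. -/
def CyclicallyConnected {X : Type} [TopologicalSpace X] (C : Set X) : Prop :=
  ∀ x ∈ C, ∀ y ∈ C, ∃ J : Set X, J ⊆ C ∧ IsJordanCurve J ∧ x ∈ J ∧ y ∈ J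

/-- A maximal cyclic subset: non-degenerate, cyclicly connected, and not a proper subset
of any cyclicly connected subset. -/
def MaximalCyclic {X : Type} [TopologicalSpace X] (T : Set X) : Prop :=
  ¬ T.Subsingleton ∧ CyclicallyConnected T ∧
    ∀ C : Set X, CyclicallyConnected C → T ⊆ C → C = T
/-- Locally strongly contractible: every point `x` has arbitrarily small open
neighborhoods `V` such that `{x}` is a strong deformation retract of `V`. -/
def LocallyStronglyContractible (X : Type) [TopologicalSpace X] : Prop :=
  ∀ x : X, ∀ U ∈ nhds x, ∃ V : Set X, IsOpen V ∧ V ⊆ U ∧ ∃ (hx : x ∈ V),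
    ∃ H : C(↥V × unitInterval, ↥V),
      (∀ v, H (v, 0) = v) ∧ (∀ v, H (v, 1) = ⟨x, hx⟩) ∧ ∀ t, H (⟨x, hx⟩, t) = ⟨x, hx⟩

open Topology Filter

/-- Two points that lie in a common preconnected set of diameter at most `ε`. -/
def SmallLinked {X : Type} [MetricSpace X] (ε : ℝ) (x y : X) : Prop :=
  ∃ S : Set X, IsPreconnected S ∧ x ∈ S ∧ y ∈ S ∧ ∀ u ∈ S, ∀ v ∈ S, dist u v ≤ ε

lemma SmallLinked.refl {X : Type} [MetricSpace X] {ε : ℝ} (hε : 0 ≤ ε) (x : X) :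
    SmallLinked ε x x :=
  ⟨{x}, isPreconnected_singleton, rfl, rfl, by rintro u rfl v rfl; simpa using hε⟩

lemma exists_uniform_chain {X : Type} [MetricSpace X] [CompactSpace X] [LocallyConnectedSpace X]
    {ε : ℝ} (hε : 0 < ε) :
    ∃ K : ℕ, 0 < K ∧ ∀ (S : Set X), IsPreconnected S → ∀ a ∈ S, ∀ b ∈ S,
      ∃ c : ℕ → X, c 0 = a ∧ c K = b ∧ (∀ j, c j ∈ S) ∧ ∀ j, SmallLinked ε (c j) (c (j + 1)) := by
  classical
  have hB : ∀ x : X, ∃ B : Set X, IsOpen B ∧ x ∈ B ∧ IsPreconnected B ∧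
      ∀ u ∈ B, ∀ v ∈ B, dist u v ≤ ε / 2 := by
    intro x
    obtain ⟨B, hBs, hBo, hxB, hBc⟩ := locallyConnectedSpace_iff_subsets_isOpen_isConnected.1
      ‹_› x (ball x (ε / 4)) (ball_mem_nhds x (by positivity))
    refine ⟨B, hBo, hxB, hBc.isPreconnected, fun u hu v hv => ?_⟩
    have h1 := mem_ball.1 (hBs hu)
    have h2 := mem_ball'.1 (hBs hv)
    linarith [dist_triangle u x v]
  choose B hBo hxB hBc hBd using hB
  obtain ⟨t, ht⟩ := isCompact_univ.elim_finite_subcover B hBo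
    (fun x _ => mem_iUnion.2 ⟨x, hxB x⟩)
  refine ⟨t.card + 2, by omega, fun S hS a ha b hb => ?_⟩
  let I := {i : X // i ∈ t ∧ (B i ∩ S).Nonempty}
  let G : SimpleGraph I := SimpleGraph.fromRel fun i j => (B i.1 ∩ B j.1).Nonempty
  have hcov : ∀ x ∈ S, ∃ i : I, x ∈ B i.1 := by
    intro x hx
    obtain ⟨i, hi, hxi⟩ := mem_iUnion₂.1 (ht (mem_univ x))
    exact ⟨⟨i, hi, x, hxi, hx⟩, hxi⟩
  obtain ⟨ia, hia⟩ := hcov a ha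
  obtain ⟨ib, hib⟩ := hcov b hb
  have hadj : ∀ i j : I, (B i.1 ∩ B j.1).Nonempty → G.Reachable i j := by
    intro i j hij
    by_cases h : i = j
    · rw [h]
    · exact SimpleGraph.Adj.reachable ((SimpleGraph.fromRel_adj _ _ _).2 ⟨h, Or.inl hij⟩)
  have hreach : G.Reachable ia ib := by
    by_contra hcon
    obtain ⟨x, hxS, hxU, hxV⟩ := hS (⋃ i : {i : I // G.Reachable ia i}, B i.1.1)
      (⋃ i : {i : I // ¬ G.Reachable ia i}, B i.1.1)
      (isOpen_iUnion fun i => hBo _) (isOpen_iUnion fun i => hBo _) (by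
        intro x hx
        obtain ⟨i, hi⟩ := hcov x hx
        by_cases h : G.Reachable ia i
        · exact Or.inl (mem_iUnion.2 ⟨⟨i, h⟩, hi⟩)
        · exact Or.inr (mem_iUnion.2 ⟨⟨i, h⟩, hi⟩))
      ⟨a, ha, mem_iUnion.2 ⟨⟨ia, .rfl⟩, hia⟩⟩
      ⟨b, hb, mem_iUnion.2 ⟨⟨ib, hcon⟩, hib⟩⟩
    obtain ⟨⟨i, hi⟩, hxi⟩ := mem_iUnion.1 hxU
    obtain ⟨⟨j, hj⟩, hxj⟩ := mem_iUnion.1 hxV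
    exact hj (hi.trans (hadj i j ⟨x, hxi, hxj⟩))
  obtain ⟨w⟩ := hreach
  have : Finite I := Finite.of_injective (fun i : I => (⟨i.1, i.2.1⟩ : t))
    (fun i j h => Subtype.ext (congrArg (fun z : t => z.1) h))
  have := Fintype.ofFinite I
  have hlen : w.toPath.1.length < t.card := by
    refine lt_of_lt_of_le w.toPath.2.length_lt ?_
    have := Fintype.card_le_of_injective (fun i : I => (⟨i.1, i.2.1⟩ : t))
      (fun i j h => Subtype.ext (congrArg (fun z : t => z.1) h))
    simpa using this
  set p := w.toPath.1
  choose q hqB hqS using fun i : I => i.2.2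
  have hcons : ∀ j, (B (p.getVert j).1 ∩ B (p.getVert (j + 1)).1).Nonempty := by
    intro j
    rcases lt_or_ge j p.length with h | h
    · have := (SimpleGraph.fromRel_adj _ _ _).1 (p.adj_getVert_succ h)
      rcases this.2 with h | h
      · exact h
      · rwa [inter_comm]
    · rw [p.getVert_of_length_le h, p.getVert_of_length_le (by omega), inter_self]
      exact ⟨_, hxB _⟩
  refine ⟨fun j => if j = 0 then a else if j < t.card + 2 then q (p.getVert (j - 1)) else b,
    by simp, by simp, ?_, ?_⟩
  · intro j
    dsimp only
    split_ifs
    · exact ha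
    · exact hqS _
    · exact hb
  · intro j
    rcases Nat.eq_zero_or_pos j with rfl | hj
    · have h0 : q ia ∈ B ia.1 := hqB ia
      simp only [if_true, Nat.zero_add, Nat.one_ne_zero, if_false,
        show 1 < t.card + 2 by omega, Nat.sub_self, SimpleGraph.Walk.getVert_zero]
      exact ⟨B ia.1, hBc _, hia, h0, fun u hu v hv => (hBd _ u hu v hv).trans (by linarith)⟩
    · have hj0 : j ≠ 0 := by omega
      simp only [hj0, if_false, Nat.succ_ne_zero, Nat.add_sub_cancel]
      by_cases h1 : j + 1 < t.card + 2
      · rw [if_pos h1, if_pos (by omega)]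
        obtain ⟨k, rfl⟩ : ∃ k, j = k + 1 := ⟨j - 1, by omega⟩
        simp only [Nat.add_sub_cancel]
        obtain ⟨z, hz1, hz2⟩ := hcons k
        refine ⟨_, (hBc _).union z hz1 hz2 (hBc _), Or.inl (hqB _), Or.inr (hqB _), ?_⟩
        have key : ∀ i : I, z ∈ B i.1 → ∀ u ∈ B i.1, dist u z ≤ ε / 2 :=
          fun i hz u hu => hBd _ u hu z hz
        intro u hu v hv
        have hu' : dist u z ≤ ε / 2 := hu.elim (key _ hz1 u) (key _ hz2 u)
        have hv' : dist v z ≤ ε / 2 := hv.elim (key _ hz1 v) (key _ hz2 v)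
        linarith [dist_triangle_right u v z]
      · rw [if_neg h1]
        by_cases h2 : j < t.card + 2
        · rw [if_pos h2, p.getVert_of_length_le (by omega)]
          exact ⟨B ib.1, hBc _, hqB _, hib, fun u hu v hv => (hBd _ u hu v hv).trans (by linarith)⟩
        · rw [if_neg h2]
          exact SmallLinked.refl hε.le b

lemma SmallLinked.joinedIn {X : Type} [MetricSpace X] [CompactSpace X] [LocallyConnectedSpace X]
    {ε : ℝ} (hε : 0 < ε) {a b : X} (hab : SmallLinked ε a b) :
    JoinedIn (closedBall a (3 * ε)) a b := by
  classical
  let e : ℕ → ℝ := fun n => ε / 2 ^ n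
  have he : ∀ n, 0 < e n := fun n => by positivity
  choose K hK hchain using fun n => exists_uniform_chain (X := X) (he (n + 1))
  have hc : ∀ n (x y : X), ∃ c : ℕ → X, SmallLinked (e n) x y →
      c 0 = x ∧ c (K n) = y ∧ (∀ j, dist (c j) x ≤ e n) ∧
        ∀ j, SmallLinked (e (n + 1)) (c j) (c (j + 1)) := by
    intro n x y
    by_cases h : SmallLinked (e n) x y
    · obtain ⟨S, hS, hx, hy, hd⟩ := h
      obtain ⟨c, h0, h1, h2, h3⟩ := hchain n S hS x hx y hy
      exact ⟨c, fun _ => ⟨h0, h1, fun j => hd _ (h2 j) _ hx, h3⟩⟩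
    · exact ⟨fun _ => x, fun h' => absurd h' h⟩
  choose c hc using hc
  let p : ℕ → ℕ → X := fun n => Nat.rec (fun j => if j = 0 then a else b)
    (fun n pn j => c n (pn (j / K n)) (pn (j / K n + 1)) (j % K n)) n
  obtain ⟨L, hLz, hLs⟩ : ∃ L : ℕ → ℕ, L 0 = 1 ∧ ∀ n, L (n + 1) = L n * K n :=
    ⟨fun n => Nat.rec 1 (fun n l => l * K n) n, rfl, fun n => rfl⟩
  have hp0 : ∀ j, p 0 j = if j = 0 then a else b := fun j => rfl
  have hps : ∀ n j, p (n + 1) j = c n (p n (j / K n)) (p n (j / K n + 1)) (j % K n) :=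
    fun n j => rfl
  have hLpos : ∀ n, 0 < L n := by
    intro n
    induction n with
    | zero => rw [hLz]; exact Nat.one_pos
    | succ n ih => rw [hLs]; exact Nat.mul_pos ih (hK n)
  have hgood : ∀ n j, SmallLinked (e n) (p n j) (p n (j + 1)) := by
    intro n
    induction n with
    | zero =>
      intro j
      rw [hp0, hp0]
      have e0 : e 0 = ε := by simp [e]
      rw [e0]
      by_cases hj : j = 0
      · simpa [hj] using hab
      · simpa [hj] using SmallLinked.refl hε.le b
    | succ n ih =>
      intro j
      obtain ⟨h0, h1, -, h3⟩ := hc n _ _ (ih (j / K n))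
      rw [hps, hps]
      have hdm := Nat.div_add_mod j (K n)
      have hmlt := Nat.mod_lt j (hK n)
      by_cases hlt : j % K n + 1 < K n
      · have hj : j + 1 = (j % K n + 1) + K n * (j / K n) := by omega
        have e1 : (j + 1) / K n = j / K n := by
          rw [hj, Nat.add_mul_div_left _ _ (hK n), Nat.div_eq_of_lt hlt, Nat.zero_add]
        have e2 : (j + 1) % K n = j % K n + 1 := by
          rw [hj, Nat.add_mul_mod_self_left, Nat.mod_eq_of_lt hlt]
        rw [e1, e2]
        exact h3 _
      · have hKe : j % K n + 1 = K n := by omega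
        have hj : j + 1 = K n * (j / K n + 1) := by rw [Nat.mul_add]; omega
        have e1 : (j + 1) / K n = j / K n + 1 := by rw [hj, Nat.mul_div_cancel_left _ (hK n)]
        have e2 : (j + 1) % K n = 0 := by rw [hj, Nat.mul_mod_right]
        rw [e1, e2, (hc n _ _ (ih (j / K n + 1))).1]
        have := h3 (j % K n)
        rwa [hKe, h1] at this
  have hL0 : ∀ n, p n (L n) = b := by
    intro n
    induction n with
    | zero => simp [hp0, hLz]
    | succ n ih =>
      rw [hps, hLs, Nat.mul_div_cancel _ (hK n), Nat.mul_mod_left,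
        (hc n _ _ (hgood n _)).1, ih]
  have hz0 : ∀ n, p n 0 = a := by
    intro n
    induction n with
    | zero => simp [hp0]
    | succ n ih => rw [hps, Nat.zero_div, Nat.zero_mod, (hc n _ _ (hgood n _)).1, ih]
  let f : ℕ → ℝ → X := fun n t => p n ⌊t * (L n : ℝ)⌋₊
  have hfd : ∀ t n, dist (f n t) (f (n + 1) t) ≤ (2 * ε) / 2 / 2 ^ n := by
    intro t n
    have h1 : ⌊t * (L (n + 1) : ℝ)⌋₊ / K n = ⌊t * (L n : ℝ)⌋₊ := by
      rw [hLs, Nat.cast_mul, ← mul_assoc]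
      exact Nat.mul_cast_floor_div_cancel (hK n).ne' _
    change dist (p n ⌊t * (L n : ℝ)⌋₊) (p (n + 1) ⌊t * (L (n + 1) : ℝ)⌋₊) ≤ _
    rw [hps, h1, dist_comm]
    refine ((hc n _ _ (hgood n _)).2.2.1 _).trans (le_of_eq ?_)
    simp only [e]
    ring
  have hlim : ∀ t, ∃ y, Tendsto (fun n => f n t) atTop (𝓝 y) := fun t =>
    cauchySeq_tendsto_of_complete (cauchySeq_of_le_geometric_two (fun n => hfd t n))
  choose F hF using hlim
  have hFd : ∀ t n, dist (f n t) (F t) ≤ 2 * ε / 2 ^ n := fun t n =>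
    dist_le_of_le_geometric_two_of_tendsto (fun n => hfd t n) (hF t) n
  have hFc : ContinuousOn F (Icc 0 1) := by
    rw [Metric.continuousOn_iff]
    intro s hs δ hδ
    obtain ⟨n, hn⟩ : ∃ n : ℕ, 5 * ε / δ < 2 ^ n := pow_unbounded_of_one_lt _ (by norm_num)
    refine ⟨1 / L n, by have := hLpos n; positivity, fun t ht hd => ?_⟩
    have hLn : (0 : ℝ) < L n := by exact_mod_cast hLpos n
    have hnear : ∀ u v : ℝ, 0 ≤ u → u ≤ v → v < u + 1 / L n → dist (f n u) (f n v) ≤ e n := by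
      intro u v hu huv hv
      have h1 : ⌊u * (L n : ℝ)⌋₊ ≤ ⌊v * (L n : ℝ)⌋₊ := Nat.floor_mono (by gcongr)
      have h2 : ⌊v * (L n : ℝ)⌋₊ ≤ ⌊u * (L n : ℝ)⌋₊ + 1 := by
        rw [← Nat.floor_add_one (by positivity)]
        apply Nat.floor_mono
        have : v * L n ≤ (u + 1 / L n) * L n := by gcongr
        rwa [add_mul, one_div, inv_mul_cancel₀ hLn.ne'] at this
      change dist (p n _) (p n _) ≤ _
      rcases (show ⌊v * (L n : ℝ)⌋₊ = ⌊u * (L n : ℝ)⌋₊ ∨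
          ⌊v * (L n : ℝ)⌋₊ = ⌊u * (L n : ℝ)⌋₊ + 1 by omega) with h | h
      · rw [h, dist_self]; exact (he n).le
      · rw [h]
        obtain ⟨S, -, h1, h2, h3⟩ := hgood n ⌊u * (L n : ℝ)⌋₊
        exact h3 _ h1 _ h2
    have hts : dist (f n t) (f n s) ≤ e n := by
      rw [Real.dist_eq, abs_lt] at hd
      rcases le_total t s with h | h
      · exact hnear t s ht.1 h (by linarith)
      · rw [dist_comm]; exact hnear s t hs.1 h (by linarith)
    have h1 := hFd t n
    have h2 := hFd s n
    have h3 : dist (F t) (F s) ≤ 5 * ε / 2 ^ n := by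
      have := dist_triangle4 (F t) (f n t) (f n s) (F s)
      rw [dist_comm] at h1
      have : 5 * ε / 2 ^ n = 2 * ε / 2 ^ n + ε / 2 ^ n + 2 * ε / 2 ^ n := by ring
      simp only [e] at hts
      linarith
    refine h3.trans_lt ?_
    rw [div_lt_iff₀ hδ] at hn
    rw [div_lt_iff₀ (by positivity)]
    linarith
  have hF0 : F 0 = a := tendsto_nhds_unique (hF 0) (by simp [f, hz0])
  have hF1 : F 1 = b := tendsto_nhds_unique (hF 1) (by simp [f, hL0])
  refine JoinedIn.ofLine hFc hF0 hF1 ?_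
  rintro _ ⟨t, -, rfl⟩
  have h1 := hFd t 0
  have h2 : dist (f 0 t) a ≤ ε := by
    change dist (p 0 _) a ≤ ε
    rw [hp0]
    split_ifs
    · simpa using hε.le
    · obtain ⟨S, -, h1, h2, h3⟩ := hab
      exact h3 _ h2 _ h1
  rw [mem_closedBall]
  have := dist_triangle_left (F t) a (f 0 t)
  simp only [pow_zero, div_one] at h1
  linarith

theorem locallyPathConnectedSpace_of_compact {X : Type} [MetricSpace X] [CompactSpace X]
    [LocallyConnectedSpace X] : LocallyPathConnectedSpace X := by
  rw [locallyPathConnectedSpace_iff_pathComponentIn_mem_nhds]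
  intro x U hU hxU
  obtain ⟨δ, hδ, hδU⟩ := Metric.isOpen_iff.1 hU x hxU
  obtain ⟨B, hBs, hBo, hxB, hBc⟩ := locallyConnectedSpace_iff_subsets_isOpen_isConnected.1
    ‹_› x (ball x (δ / 8)) (ball_mem_nhds x (by positivity))
  refine mem_of_superset (hBo.mem_nhds hxB) fun y hy => ?_
  have : SmallLinked (δ / 4) x y := ⟨B, hBc.isPreconnected, hxB, hy, fun u hu v hv => by
    have h1 := mem_ball.1 (hBs hu)
    have h2 := mem_ball'.1 (hBs hv)
    linarith [dist_triangle u x v]⟩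
  exact (this.joinedIn (by positivity)).mono
    ((closedBall_subset_ball (by linarith)).trans hδU)

/-- A strictly antitone functional on nonempty closed sets that is continuous for the
Hausdorff distance. -/
lemma exists_whitney_functional (X : Type) [MetricSpace X] [CompactSpace X] [Nonempty X] :
    ∃ μ : Set X → ℝ,
      (∀ (A B : Set X) (ε : ℝ), A.Nonempty → B.Nonempty → (∀ a ∈ A, ∃ b ∈ B, dist a b ≤ ε) →
        μ B ≤ μ A + ε) ∧
      ∀ A B : Set X, A.Nonempty → IsClosed A → A ⊆ B → μ A = μ B → B ⊆ A := by
  let q : ℕ → X := TopologicalSpace.denseSeq X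
  have hq : DenseRange q := TopologicalSpace.denseRange_denseSeq X
  let D := diam (univ : Set X)
  have hbd : ∀ (A : Set X), A.Nonempty → ∀ x, infDist x A ≤ D := fun A hA x => by
    obtain ⟨a, ha⟩ := hA
    exact (infDist_le_dist_of_mem ha).trans
      (dist_le_diam_of_mem isCompact_univ.isBounded (mem_univ _) (mem_univ _))
  have hsum : ∀ A : Set X, A.Nonempty → Summable fun n => infDist (q n) A / 2 / 2 ^ n :=
    fun A hA => Summable.of_nonneg_of_le
      (fun n => by have := infDist_nonneg (x := q n) (s := A); positivity)
      (fun n => by have := hbd A hA (q n); gcongr) (summable_geometric_two' D)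
  refine ⟨fun A => ∑' n, infDist (q n) A / 2 / 2 ^ n, ?_, ?_⟩
  · intro A B ε hA hB h
    have key : ∀ x, infDist x B ≤ infDist x A + ε := by
      intro x
      rw [← sub_le_iff_le_add, le_infDist hA]
      intro a ha
      obtain ⟨b, hb, hab⟩ := h a ha
      have := infDist_le_dist_of_mem (x := x) hb
      linarith [dist_triangle x a b]
    have h2 := (hsum A hA).hasSum.add (hasSum_geometric_two' ε)
    refine hasSum_le (fun n => ?_) (hsum B hB).hasSum h2
    have := key (q n)
    rw [← add_div, ← add_div]
    gcongr
  · intro A B hA hAc hAB hμ b hb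
    have hB := hA.mono hAB
    have hle : ∀ x, infDist x B ≤ infDist x A := fun x => infDist_le_infDist_of_subset hAB hA
    have heq : ∀ n, infDist (q n) B = infDist (q n) A := by
      by_contra! hne
      obtain ⟨n, hn⟩ := hne
      refine (ne_of_gt ?_) hμ
      refine (hsum B hB).tsum_lt_tsum (i := n) (fun k => ?_) ?_ (hsum A hA)
      · have := hle (q k)
        dsimp only
        gcongr
      · have := lt_of_le_of_ne (hle (q n)) hn
        gcongr
    have := DenseRange.equalizer hq (continuous_infDist_pt B) (continuous_infDist_pt A)
      (funext heq)
    rw [hAc.mem_iff_infDist_zero hA, ← congrFun this b]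
    exact infDist_zero_of_mem hb

lemma joinedIn_of_tendsto {X : Type} [MetricSpace X] {p : X} {x : ℕ → X} {S : ℕ → Set X}
    {r : ℕ → ℝ} (hr : Tendsto r atTop (𝓝 0)) (hS : ∀ n, S n ⊆ closedBall p (r n))
    (hj : ∀ n, JoinedIn (S n) (x n) (x (n + 1))) :
    JoinedIn ((⋃ n, S n) ∪ {p}) (x 0) p := by
  obtain ⟨γ, hγc, hγ0, hγ1, hγm⟩ : ∃ γ : ℕ → ℝ → X, (∀ n, Continuous (γ n)) ∧
      (∀ n, γ n 0 = x n) ∧ (∀ n, γ n 1 = x (n + 1)) ∧ ∀ n t, γ n t ∈ S n :=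
    ⟨fun n => (hj n).somePath.extend, fun n => (hj n).somePath.continuous_extend,
      fun n => by simp, fun n => by simp, fun n t => (hj n).somePath_mem _⟩
  let g : ℝ → X := fun t => γ ⌊t⌋₊ (t - ⌊t⌋₊)
  have hgm : ∀ t, g t ∈ S ⌊t⌋₊ := fun t => hγm _ _
  have hgeq : ∀ n : ℕ, EqOn g (fun t => γ n (t - n)) (Icc (n : ℝ) (n + 1)) := by
    intro n t ht
    rcases ht.2.lt_or_eq with h | h
    · have : ⌊t⌋₊ = n := (Nat.floor_eq_iff (n.cast_nonneg.trans ht.1)).2 ⟨ht.1, h⟩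
      simp only [g, this]
    · have h1 : ⌊t⌋₊ = n + 1 := by rw [h]; exact_mod_cast Nat.floor_natCast (n + 1)
      simp only [g, h1]
      rw [h]
      simp [hγ0, hγ1]
  have hgc : ContinuousOn g (⋃ n : ℕ, Icc (n : ℝ) (n + 1)) := by
    refine LocallyFinite.continuousOn_iUnion (fun t => ⟨ball t 1, ball_mem_nhds t one_pos, ?_⟩)
      (fun n => isClosed_Icc) (fun n => ContinuousOn.congr ?_ (hgeq n))
    · refine (Set.finite_Iic (⌈t⌉₊ + 1)).subset ?_
      rintro n ⟨s, hs, hst⟩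
      rw [mem_ball, Real.dist_eq, abs_lt] at hst
      have := Nat.le_ceil t
      have h2 := hs.1
      have : (n : ℝ) ≤ (⌈t⌉₊ + 1 : ℕ) := by push_cast; linarith
      exact_mod_cast this
    · exact ((hγc n).comp (continuous_id.sub continuous_const)).continuousOn
  let h : ℝ → X := fun s => if s = 0 then p else g (1 / s - 1)
  have hh0 : h 0 = p := by simp [h]
  have hh1 : h 1 = x 0 := by simp [h, g, hγ0]
  refine (JoinedIn.ofLine (f := h) ?_ hh0 hh1 ?_).symm
  · intro s hs
    rcases hs.1.eq_or_lt with h0 | h0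
    · rw [← h0, Metric.continuousWithinAt_iff]
      intro ε hε
      obtain ⟨n, hn⟩ := eventually_atTop.1 (hr.eventually (gt_mem_nhds hε))
      refine ⟨1 / (n + 1), by positivity, fun {t} ht hd => ?_⟩
      rw [hh0]
      by_cases ht0 : t = 0
      · simpa [h, ht0] using hε
      · have htp : 0 < t := lt_of_le_of_ne ht.1 (Ne.symm ht0)
        simp only [h, ht0, if_false]
        rw [Real.dist_eq, sub_zero, abs_of_pos htp] at hd
        have h1 : (n : ℝ) ≤ 1 / t - 1 := by
          have := (lt_one_div htp (by positivity)).1 hd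
          linarith
        exact (hS _ (hgm _)).trans_lt (hn _ (Nat.le_floor h1))
    · have hmem : 1 / s - 1 ∈ Ici (0 : ℝ) := by
        have := one_le_one_div h0 hs.2
        simpa using this
      have hcov : Ici (0 : ℝ) ⊆ ⋃ n : ℕ, Icc (n : ℝ) (n + 1) := fun t ht =>
        mem_iUnion.2 ⟨⌊t⌋₊, Nat.floor_le ht, (Nat.lt_floor_add_one t).le⟩
      have hc1 : ContinuousWithinAt (fun t : ℝ => g (1 / t - 1)) (Ioc 0 1) s := by
        refine ContinuousWithinAt.comp (g := g) (f := fun t : ℝ => 1 / t - 1) (t := Ici 0)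
          ((hgc.mono hcov) _ hmem) ?_ ?_
        · exact ((continuousAt_const.div continuousAt_id h0.ne').sub
            continuousAt_const).continuousWithinAt
        · intro t ht
          have := one_le_one_div ht.1 ht.2
          simpa using this
      have hc2 : ContinuousWithinAt h (Ioc 0 1) s := hc1.congr
        (fun t ht => by simp [h, ht.1.ne']) (by simp [h, h0.ne'])
      refine hc2.mono_of_mem_nhdsWithin ?_
      filter_upwards [self_mem_nhdsWithin, mem_nhdsWithin_of_mem_nhds (lt_mem_nhds h0)] with t h1 h2
      exact ⟨h2, h1.2⟩
  · rintro _ ⟨s, hs, rfl⟩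
    by_cases h0 : s = 0
    · exact Or.inr (by simp [h, h0])
    · exact Or.inl (mem_iUnion.2 ⟨_, by simpa [h, h0] using hgm _⟩)

/-- `A` is an arc with end points `a` and `b`. -/
def IsArc {X : Type} [TopologicalSpace X] (A : Set X) (a b : X) : Prop :=
  ∃ (f : ℝ → X) (u v : ℝ), u < v ∧ ContinuousOn f (Icc u v) ∧ InjOn f (Icc u v) ∧
    f u = a ∧ f v = b ∧ f '' Icc u v = A

/-- A closed subset of the unit interval, containing the end points, such that `f` takes the
same value at both ends of each complementary gap. -/
def GapCollapsing {X : Type} (f : ℝ → X) (K : Set ℝ) : Prop :=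
  IsClosed K ∧ K ⊆ Icc 0 1 ∧ 0 ∈ K ∧ 1 ∈ K ∧
    ∀ s ∈ K, ∀ t ∈ K, s < t → Ioo s t ∩ K = ∅ → f s = f t

lemma exists_minimal_gapCollapsing {X : Type} [MetricSpace X] {f : ℝ → X} (hf : Continuous f) :
    ∃ K, Minimal (GapCollapsing f) K := by
  have hI : GapCollapsing f (Icc 0 1) := by
    refine ⟨isClosed_Icc, Subset.rfl, by simp, by simp, fun s hs t ht hst he => ?_⟩
    have : (s + t) / 2 ∈ Ioo s t ∩ Icc 0 1 :=
      ⟨⟨by linarith, by linarith⟩, by linarith [hs.1, ht.1], by linarith [hs.2, ht.2]⟩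
    rw [he] at this
    exact this.elim
  suffices H : ∀ c ⊆ {K | GapCollapsing f K}, IsChain (· ⊆ ·) c → c.Nonempty →
      ∃ lb ∈ {K | GapCollapsing f K}, ∀ s ∈ c, lb ⊆ s by
    obtain ⟨m, -, hm⟩ := zorn_superset_nonempty _ H _ hI
    exact ⟨m, hm⟩
  intro c hcS hc hne
  refine ⟨⋂₀ c, ⟨isClosed_sInter fun K hK => (hcS hK).1, ?_, fun K hK => (hcS hK).2.2.1,
    fun K hK => (hcS hK).2.2.2.1, ?_⟩, fun K hK => sInter_subset_of_mem hK⟩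
  · obtain ⟨K, hK⟩ := hne
    exact (sInter_subset_of_mem hK).trans (hcS hK).2.1
  intro s hs t ht hst he
  by_contra hfst
  have hpos : 0 < dist (f s) (f t) / 2 := by have := dist_pos.2 hfst; positivity
  obtain ⟨δ₁, hδ₁, h1⟩ := Metric.continuous_iff.1 hf s _ hpos
  obtain ⟨δ₂, hδ₂, h2⟩ := Metric.continuous_iff.1 hf t _ hpos
  obtain ⟨ε, hε, hε1, hε2, hε3⟩ : ∃ ε > 0, ε < δ₁ ∧ ε < δ₂ ∧ ε < (t - s) / 2 := by
    refine ⟨min δ₁ (min δ₂ ((t - s) / 2)) / 2, ?_, ?_, ?_, ?_⟩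
    · have : 0 < (t - s) / 2 := by linarith
      positivity
    all_goals
      have h3 : 0 < min δ₁ (min δ₂ ((t - s) / 2)) := by
        have : 0 < (t - s) / 2 := by linarith
        positivity
      have h4 := min_le_left δ₁ (min δ₂ ((t - s) / 2))
      have h5 := min_le_right δ₁ (min δ₂ ((t - s) / 2))
      have h6 := min_le_left δ₂ ((t - s) / 2)
      have h7 := min_le_right δ₂ ((t - s) / 2)
      linarith
  obtain ⟨K, hK, hKe⟩ : ∃ K ∈ c, Icc (s + ε) (t - ε) ∩ K = ∅ := by
    by_contra! hcon
    have : Nonempty c := hne.to_subtype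
    obtain ⟨z, hz⟩ := IsCompact.nonempty_iInter_of_directed_nonempty_isCompact_isClosed
      (fun K : c => Icc (s + ε) (t - ε) ∩ K.1) (by
        intro K L
        rcases hc.total K.2 L.2 with h | h
        · exact ⟨K, Subset.rfl, inter_subset_inter_right _ h⟩
        · exact ⟨L, inter_subset_inter_right _ h, Subset.rfl⟩)
      (fun K => hcon K K.2)
      (fun K => isCompact_Icc.inter_right (hcS K.2).1)
      (fun K => isClosed_Icc.inter (hcS K.2).1)
    rw [mem_iInter] at hz
    obtain ⟨K0, hK0⟩ := hne
    have hz' : z ∈ Ioo s t ∩ ⋂₀ c := by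
      have := (hz ⟨K0, hK0⟩).1
      exact ⟨⟨by linarith [this.1], by linarith [this.2]⟩, fun K hK => (hz ⟨K, hK⟩).2⟩
    rw [he] at hz'
    exact hz'
  have hKc := hcS hK
  obtain ⟨s', hs', hs'm⟩ := (isCompact_Icc.inter_right hKc.1 :
    IsCompact (Icc s (s + ε) ∩ K)).exists_isGreatest ⟨s, ⟨le_rfl, by linarith⟩, hs K hK⟩
  obtain ⟨t', ht', ht'm⟩ := (isCompact_Icc.inter_right hKc.1 :
    IsCompact (Icc (t - ε) t ∩ K)).exists_isLeast ⟨t, ⟨by linarith, le_rfl⟩, ht K hK⟩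
  have hst' : f s' = f t' := by
    refine hKc.2.2.2.2 s' hs'.2 t' ht'.2 (by linarith [hs'.1.2, ht'.1.1]) ?_
    by_contra hne
    obtain ⟨z, hz, hzK⟩ := nonempty_iff_ne_empty.2 hne
    rcases le_or_gt z (s + ε) with h | h
    · linarith [hs'm ⟨⟨by linarith [hs'.1.1, hz.1], h⟩, hzK⟩, hz.1]
    · rcases le_or_gt (t - ε) z with h' | h'
      · linarith [ht'm ⟨⟨h', by linarith [ht'.1.2, hz.2]⟩, hzK⟩, hz.2]
      · have : z ∈ Icc (s + ε) (t - ε) ∩ K := ⟨⟨h.le, h'.le⟩, hzK⟩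
        rw [hKe] at this
        exact this
  have hd1 := h1 s' (by rw [Real.dist_eq, abs_lt]; constructor <;> linarith [hs'.1.1, hs'.1.2])
  have hd2 := h2 t' (by rw [Real.dist_eq, abs_lt]; constructor <;> linarith [ht'.1.1, ht'.1.2])
  rw [hst'] at hd1
  linarith [dist_triangle_left (f s) (f t) (f t')]

lemma Minimal.gap_of_eq {X : Type} {f : ℝ → X} {K : Set ℝ}
    (hK : Minimal (GapCollapsing f) K) {s t : ℝ} (hs : s ∈ K) (ht : t ∈ K)
    (hf : f s = f t) : Ioo s t ∩ K = ∅ := by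
  obtain ⟨⟨hc, hI, h0, h1, hg⟩, hmin⟩ := hK
  have hKI : ∀ k ∈ K, k ∉ Ioo s t → k ∈ K \ Ioo s t := fun k hk h => ⟨hk, h⟩
  have : GapCollapsing f (K \ Ioo s t) := by
    refine ⟨hc.sdiff isOpen_Ioo, sdiff_subset.trans hI,
      ⟨h0, fun h => by linarith [h.1, (hI hs).1]⟩,
      ⟨h1, fun h => by linarith [h.2, (hI ht).2]⟩, fun p hp q hq hpq he => ?_⟩
    by_cases hk : Ioo p q ∩ K = ∅
    · exact hg p hp.1 q hq.1 hpq hk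
    obtain ⟨k, hkpq, hkK⟩ := nonempty_iff_ne_empty.2 hk
    have hnot : ∀ z ∈ K, z ∉ Ioo s t → z ∉ Ioo p q := by
      intro z hz hz' hzpq
      have : z ∈ Ioo p q ∩ (K \ Ioo s t) := ⟨hzpq, hz, hz'⟩
      rw [he] at this
      exact this
    have hkst : k ∈ Ioo s t := by
      by_contra h
      exact hnot k hkK h hkpq
    have hs' := hnot s hs (fun h => lt_irrefl _ h.1)
    have ht' := hnot t ht (fun h => lt_irrefl _ h.2)
    have hp' := hp.2
    have hq' := hq.2
    simp only [mem_Ioo, not_and] at *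
    have e1 : p = s := by
      apply le_antisymm
      · by_contra! h
        linarith [hp' h, hkpq.1, hkst.2]
      · by_contra! h
        linarith [hs' h, hkst.1, hkpq.2]
    have e2 : q = t := by
      apply le_antisymm
      · by_contra! h
        linarith [ht' (by linarith [hkpq.1, hkst.2])]
      · by_contra! h
        linarith [hq' (by linarith [hkpq.2, hkst.1])]
    rw [e1, e2, hf]
  have hle := hmin this sdiff_subset
  ext k
  simp only [mem_inter_iff, mem_empty_iff_false, iff_false]
  rintro ⟨hk, hkK⟩
  exact (hle hkK).2 hk

theorem JoinedIn.exists_isArc {X : Type} [MetricSpace X] [CompactSpace X] {S : Set X} {a b : X}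
    (h : JoinedIn S a b) (hab : a ≠ b) : ∃ A ⊆ S, IsArc A a b := by
  have : Nonempty X := ⟨a⟩
  obtain ⟨μ, hμ1, hμ2⟩ := exists_whitney_functional X
  let f : ℝ → X := h.somePath.extend
  have hf : Continuous f := h.somePath.continuous_extend
  obtain ⟨K, hK⟩ := exists_minimal_gapCollapsing hf
  have hgap : ∀ s ∈ K, ∀ t ∈ K, f s = f t → Ioo s t ∩ K = ∅ := fun s hs t ht => hK.gap_of_eq hs ht
  obtain ⟨hKc, hKI, h0, h1, hg⟩ := hK.1
  have hKcomp : IsCompact K := isCompact_Icc.of_isClosed_subset hKc hKI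
  let E : ℝ → Set X := fun k => f '' (K ∩ Icc 0 k)
  have hEne : ∀ k ∈ K, (E k).Nonempty := fun k hk => ⟨f k, k, ⟨hk, (hKI hk).1, le_rfl⟩, rfl⟩
  have hEc : ∀ k, IsClosed (E k) := fun k =>
    ((hKcomp.inter_right isClosed_Icc).image hf).isClosed
  have hEm : ∀ k l, k ≤ l → E k ⊆ E l := fun k l hkl =>
    image_mono (inter_subset_inter_right _ (Icc_subset_Icc_right hkl))
  let φ : ℝ → ℝ := fun k => -μ (E k)
  have hφm : ∀ k ∈ K, ∀ l, k ≤ l → φ k ≤ φ l := by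
    intro k hk l hkl
    have := hμ1 (E k) (E l) 0 (hEne k hk) ((hEne k hk).mono (hEm k l hkl))
      (fun x hx => ⟨x, hEm k l hkl hx, by simp⟩)
    simp only [φ]
    linarith
  have hφeq1 : ∀ k ∈ K, ∀ l ∈ K, f k = f l → k ≤ l → φ k = φ l := by
    intro k hk l hl hkl hle
    have : E k = E l := by
      refine (hEm k l hle).antisymm ?_
      rintro _ ⟨j, ⟨hj, hj0, hjl⟩, rfl⟩
      rcases le_or_gt j k with hjk | hjk
      · exact ⟨j, ⟨hj, hj0, hjk⟩, rfl⟩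
      rcases hjl.eq_or_lt with rfl | hjl
      · exact ⟨k, ⟨hk, (hKI hk).1, le_rfl⟩, hkl⟩
      · have : j ∈ Ioo k l ∩ K := ⟨⟨hjk, hjl⟩, hj⟩
        rw [hgap k hk l hl hkl] at this
        exact this.elim
    simp only [φ, this]
  have hφeq2 : ∀ k ∈ K, ∀ l ∈ K, φ k = φ l → k ≤ l → f k = f l := by
    intro k hk l hl hkl hle
    obtain ⟨j, ⟨hj, hj0, hjk⟩, hjl⟩ := hμ2 (E k) (E l) (hEne k hk) (hEc k) (hEm k l hle)
      (neg_injective hkl) ⟨l, ⟨hl, (hKI hl).1, le_rfl⟩, rfl⟩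
    rcases hle.eq_or_lt with rfl | hle
    · rfl
    rcases hjk.eq_or_lt with rfl | hjk
    · exact hjl
    · have : k ∈ Ioo j l ∩ K := ⟨⟨hjk, hle⟩, hk⟩
      rw [hgap j hj l hl hjl] at this
      exact this.elim
  have hφiff : ∀ k ∈ K, ∀ l ∈ K, f k = f l ↔ φ k = φ l := by
    intro k hk l hl
    rcases le_total k l with hle | hle
    · exact ⟨fun h => hφeq1 k hk l hl h hle, fun h => hφeq2 k hk l hl h hle⟩
    · exact ⟨fun h => (hφeq1 l hl k hk h.symm hle).symm,
        fun h => (hφeq2 l hl k hk h.symm hle).symm⟩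
  have hφc : ContinuousOn φ K := by
    rw [Metric.continuousOn_iff]
    intro k hk ε hε
    obtain ⟨δ, hδ, hd⟩ := Metric.uniformContinuousOn_iff.1
      (hKcomp.uniformContinuousOn_of_continuous hf.continuousOn) (ε / 2) (by positivity)
    refine ⟨δ, hδ, fun l hl hkl => ?_⟩
    have key : ∀ k ∈ K, ∀ l ∈ K, k ≤ l → l < k + δ → |φ l - φ k| ≤ ε / 2 := by
      intro k hk l hl hle hlt
      have h1 := hφm k hk l hle
      have h2 := hμ1 (E l) (E k) (ε / 2) (hEne l hl) (hEne k hk) (by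
        rintro _ ⟨j, ⟨hj, hj0, hjl⟩, rfl⟩
        rcases le_or_gt j k with hjk | hjk
        · exact ⟨f j, ⟨j, ⟨hj, hj0, hjk⟩, rfl⟩, by simp; positivity⟩
        · refine ⟨f k, ⟨k, ⟨hk, (hKI hk).1, le_rfl⟩, rfl⟩, (hd j hj k hk ?_).le⟩
          rw [Real.dist_eq, abs_lt]; constructor <;> linarith)
      simp only [φ] at h1 ⊢
      rw [abs_le]
      constructor <;> linarith
    rw [Real.dist_eq, abs_lt] at hkl
    rw [Real.dist_eq]
    rcases le_total k l with hle | hle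
    · linarith [key k hk l hl hle (by linarith)]
    · rw [abs_sub_comm]
      linarith [key l hl k hk hle (by linarith)]
  have hlt : φ 0 < φ 1 := by
    refine lt_of_le_of_ne (hφm 0 h0 1 zero_le_one) fun h01 => hab ?_
    have := (hφiff 0 h0 1 h1).2 h01
    simpa [f] using this
  have hsurj : ∀ y ∈ Icc (φ 0) (φ 1), ∃ k ∈ K, φ k = y := by
    intro y hy
    obtain ⟨k, ⟨hk, hky⟩, hkm⟩ := (hKcomp.of_isClosed_subset
      (hφc.preimage_isClosed_of_isClosed hKc isClosed_Iic) inter_subset_left :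
      IsCompact (K ∩ φ ⁻¹' Iic y)).exists_isGreatest ⟨0, h0, hy.1⟩
    obtain ⟨l, ⟨hl, hly⟩, hlm⟩ := (hKcomp.of_isClosed_subset
      (hφc.preimage_isClosed_of_isClosed hKc isClosed_Ici) inter_subset_left :
      IsCompact (K ∩ φ ⁻¹' Ici y)).exists_isLeast ⟨1, h1, hy.2⟩
    simp only [mem_preimage, mem_Iic, mem_Ici] at hky hly
    refine ⟨k, hk, le_antisymm hky ?_⟩
    rcases le_or_gt l k with hlk | hlk
    · exact hly.trans (hφm l hl k hlk)
    · have : f k = f l := by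
        refine hg k hk l hl hlk ?_
        by_contra hne
        obtain ⟨z, hz, hzK⟩ := nonempty_iff_ne_empty.2 hne
        rcases le_total (φ z) y with h | h
        · linarith [hkm ⟨hzK, h⟩, hz.1]
        · linarith [hlm ⟨hzK, h⟩, hz.2]
      rw [(hφiff k hk l hl).1 this]
      exact hly
  have hφI : ∀ k ∈ K, φ k ∈ Icc (φ 0) (φ 1) := fun k hk =>
    ⟨hφm 0 h0 k (hKI hk).1, hφm k hk 1 (hKI hk).2⟩
  choose! κ hκK hκ using hsurj
  have heφ : ∀ k ∈ K, f (κ (φ k)) = f k := fun k hk =>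
    (hφiff _ (hκK _ (hφI k hk)) k hk).2 (hκ _ (hφI k hk))
  refine ⟨(f ∘ κ) '' Icc (φ 0) (φ 1), ?_, f ∘ κ, φ 0, φ 1, hlt, ?_, ?_, ?_, ?_, rfl⟩
  · rintro _ ⟨y, -, rfl⟩
    exact h.somePath_mem _
  · rw [continuousOn_iff_isClosed]
    intro C hC
    refine ⟨φ '' (K ∩ f ⁻¹' C), (((hKcomp.inter_right (hC.preimage hf)).image_of_continuousOn
      (hφc.mono inter_subset_left)).isClosed), ?_⟩
    ext y
    constructor
    · rintro ⟨hy, hyI⟩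
      exact ⟨⟨κ y, ⟨hκK y hyI, hy⟩, hκ y hyI⟩, hyI⟩
    · rintro ⟨⟨k, ⟨hk, hkC⟩, rfl⟩, hyI⟩
      refine ⟨?_, hyI⟩
      change f (κ (φ k)) ∈ C
      rw [heφ k hk]
      exact hkC
  · intro y hy z hz hyz
    have := (hφiff _ (hκK y hy) _ (hκK z hz)).1 hyz
    rwa [hκ y hy, hκ z hz] at this
  · simpa [f] using heφ 0 h0
  · simpa [f] using heφ 1 h1

namespace IsArc

variable {X : Type} [MetricSpace X] {A B : Set X} {a b c d : X}

lemma symm (h : IsArc A a b) : IsArc A b a := by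
  obtain ⟨f, u, v, huv, hc, hi, ha, hb, rfl⟩ := h
  have hm : MapsTo (fun t : ℝ => -t) (Icc (-v) (-u)) (Icc u v) := fun t ht =>
    ⟨by linarith [ht.2], by linarith [ht.1]⟩
  refine ⟨fun t => f (-t), -v, -u, by linarith, hc.comp continuous_neg.continuousOn hm,
    hi.comp neg_injective.injOn hm, by simpa using hb, by simpa using ha, ?_⟩
  ext x
  constructor
  · rintro ⟨t, ht, rfl⟩
    exact ⟨-t, hm ht, rfl⟩
  · rintro ⟨t, ht, rfl⟩
    exact ⟨-t, ⟨by linarith [ht.2], by linarith [ht.1]⟩, by simp⟩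

lemma left_mem (h : IsArc A a b) : a ∈ A := by
  obtain ⟨f, u, v, huv, hc, hi, ha, hb, rfl⟩ := h
  exact ⟨u, left_mem_Icc.2 huv.le, ha⟩

lemma right_mem (h : IsArc A a b) : b ∈ A := h.symm.left_mem

lemma ne (h : IsArc A a b) : a ≠ b := by
  obtain ⟨f, u, v, huv, hc, hi, rfl, rfl, rfl⟩ := h
  exact fun h => huv.ne (hi (left_mem_Icc.2 huv.le) (right_mem_Icc.2 huv.le) h)

lemma isCompact (h : IsArc A a b) : IsCompact A := by
  obtain ⟨f, u, v, huv, hc, hi, ha, hb, rfl⟩ := h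
  exact isCompact_Icc.image_of_continuousOn hc

lemma isClosed (h : IsArc A a b) : IsClosed A := h.isCompact.isClosed

lemma image {f : ℝ → X} {u v s t : ℝ} (hc : ContinuousOn f (Icc u v)) (hi : InjOn f (Icc u v))
    (hus : u ≤ s) (hst : s < t) (htv : t ≤ v) : IsArc (f '' Icc s t) (f s) (f t) :=
  have := Icc_subset_Icc hus htv
  ⟨f, s, t, hst, hc.mono this, hi.mono this, rfl, rfl, rfl⟩

lemma split (h : IsArc A a b) (hcA : c ∈ A) (hca : c ≠ a) (hcb : c ≠ b) :
    ∃ A₁ A₂, IsArc A₁ a c ∧ IsArc A₂ c b ∧ A₁ ∪ A₂ = A ∧ A₁ ∩ A₂ = {c} := by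
  obtain ⟨f, u, v, huv, hc, hi, rfl, rfl, rfl⟩ := h
  obtain ⟨t, ht, rfl⟩ := hcA
  have hut : u < t := lt_of_le_of_ne ht.1 fun h => hca (by rw [h])
  have htv : t < v := lt_of_le_of_ne ht.2 fun h => hcb (by rw [h])
  refine ⟨_, _, image hc hi le_rfl hut htv.le, image hc hi hut.le htv le_rfl, ?_, ?_⟩
  · rw [← image_union, Icc_union_Icc_eq_Icc hut.le htv.le]
  · rw [← hi.image_inter (Icc_subset_Icc_right htv.le) (Icc_subset_Icc_left hut.le),
      Icc_inter_Icc_eq_singleton hut.le htv.le, image_singleton]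

lemma exists_param (h : IsArc A a b) {p q : ℝ} (hpq : p < q) :
    ∃ f : ℝ → X, ContinuousOn f (Icc p q) ∧ InjOn f (Icc p q) ∧ f p = a ∧ f q = b ∧
      f '' Icc p q = A := by
  obtain ⟨f, u, v, huv, hc, hi, rfl, rfl, rfl⟩ := h
  let σ : ℝ → ℝ := fun t => u + (t - p) * ((v - u) / (q - p))
  have hk : 0 < (v - u) / (q - p) := div_pos (by linarith) (by linarith)
  have hkm : (q - p) * ((v - u) / (q - p)) = v - u := by
    field_simp [show q - p ≠ 0 by linarith]
  have hσp : σ p = u := by simp [σ]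
  have hσq : σ q = v := by simp only [σ]; linarith
  have hσc : Continuous σ := by fun_prop
  have hσm : StrictMono σ := fun s t hst => by
    have : (s - p) * ((v - u) / (q - p)) < (t - p) * ((v - u) / (q - p)) := by gcongr
    simp only [σ]; linarith
  have himg : σ '' Icc p q = Icc u v := by
    apply Subset.antisymm
    · rintro _ ⟨t, ht, rfl⟩
      rw [← hσp, ← hσq]
      exact ⟨hσm.monotone ht.1, hσm.monotone ht.2⟩
    · have := intermediate_value_Icc hpq.le hσc.continuousOn
      rwa [hσp, hσq] at this
  have hm : MapsTo σ (Icc p q) (Icc u v) := fun t ht => himg ▸ mem_image_of_mem σ ht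
  refine ⟨f ∘ σ, hc.comp hσc.continuousOn hm, hi.comp hσm.injective.injOn hm, by simp [hσp],
    by simp [hσq], by rw [image_comp, himg]⟩

lemma join (hA : IsArc A a b) (hB : IsArc B b c) (hAB : A ∩ B ⊆ {b}) : IsArc (A ∪ B) a c := by
  obtain ⟨f, hfc, hfi, rfl, hfb, rfl⟩ := hA.exists_param (zero_lt_one (α := ℝ))
  obtain ⟨g, hgc, hgi, hgb, rfl, rfl⟩ := hB.exists_param (one_lt_two (α := ℝ))
  let k : ℝ → X := fun t => if t ≤ 1 then f t else g t
  have hkf : EqOn k f (Icc 0 1) := fun t ht => by simp [k, ht.2]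
  have hkg : EqOn k g (Icc 1 2) := fun t ht => by
    rcases ht.1.eq_or_lt with h | h
    · simp [k, ← h, hfb, hgb]
    · simp [k, h.not_ge]
  have hU : Icc (0 : ℝ) 1 ∪ Icc 1 2 = Icc 0 2 := Icc_union_Icc_eq_Icc zero_le_one one_le_two
  refine ⟨k, 0, 2, by norm_num, ?_, ?_, by simp [k], by simp [k], ?_⟩
  · rw [← hU]
    exact (hfc.congr hkf).union_of_isClosed (hgc.congr hkg) isClosed_Icc isClosed_Icc
  · have key : ∀ s ∈ Icc (0 : ℝ) 1, ∀ t ∈ Icc (1 : ℝ) 2, k s = k t → s = t := by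
      intro s hs t ht h
      rw [hkf hs, hkg ht] at h
      have hb : f s = b := hAB ⟨⟨s, hs, rfl⟩, ⟨t, ht, h.symm⟩⟩
      have h1 : s = 1 := hfi hs ⟨zero_le_one, le_rfl⟩ (hb.trans hfb.symm)
      have h2 : (1 : ℝ) = t := hgi ⟨le_rfl, one_le_two⟩ ht (hgb.trans (hb.symm.trans h))
      exact h1.trans h2
    rw [← hU]
    rintro s (hs | hs) t (ht | ht) h
    · rw [hkf hs, hkf ht] at h
      exact hfi hs ht h
    · exact key s hs t ht h
    · exact (key t ht s hs h.symm).symm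
    · rw [hkg hs, hkg ht] at h
      exact hgi hs ht h
  · rw [← hU, image_union, hkf.image_eq, hkg.image_eq]

lemma exists_subarc (h : IsArc A a b) (hc : c ∈ A) (hd : d ∈ A) (hcd : c ≠ d) :
    ∃ B ⊆ A, IsArc B c d := by
  obtain ⟨f, u, v, huv, hfc, hfi, rfl, rfl, rfl⟩ := h
  obtain ⟨s, hs, rfl⟩ := hc
  obtain ⟨t, ht, rfl⟩ := hd
  rcases lt_trichotomy s t with h | h | h
  · exact ⟨_, image_mono (Icc_subset_Icc hs.1 ht.2), image hfc hfi hs.1 h ht.2⟩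
  · exact absurd (by rw [h]) hcd
  · exact ⟨_, image_mono (Icc_subset_Icc ht.1 hs.2), (image hfc hfi ht.1 h hs.2).symm⟩

/-- The part of an arc up to its first point in a closed set, and the remaining part. -/
lemma exists_first_hit (h : IsArc A a b) {F : Set X} (hF : IsClosed F) (hne : (A ∩ F).Nonempty)
    (ha : a ∉ F) : ∃ c ∈ F, ∃ A₁ ⊆ A, IsArc A₁ a c ∧ A₁ ∩ F = {c} ∧
      (c ≠ b → ∃ A₂, IsArc A₂ c b ∧ A₁ ∪ A₂ = A ∧ A₁ ∩ A₂ = {c}) := by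
  obtain ⟨f, u, v, huv, hfc, hfi, rfl, rfl, rfl⟩ := h
  obtain ⟨t, ⟨ht, htF⟩, hmin⟩ := (isCompact_Icc.of_isClosed_subset
    (hfc.preimage_isClosed_of_isClosed isClosed_Icc hF) inter_subset_left :
    IsCompact (Icc u v ∩ f ⁻¹' F)).exists_isLeast (by
      obtain ⟨_, ⟨t, ht, rfl⟩, htF⟩ := hne
      exact ⟨t, ht, htF⟩)
  have hut : u < t := lt_of_le_of_ne ht.1 fun h => ha (by rw [h]; exact htF)
  refine ⟨f t, htF, f '' Icc u t, image_mono (Icc_subset_Icc_right ht.2),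
    image hfc hfi le_rfl hut ht.2, ?_, fun hne => ?_⟩
  · apply Subset.antisymm
    · rintro _ ⟨⟨s, hs, rfl⟩, hsF⟩
      have := hmin ⟨⟨hs.1, hs.2.trans ht.2⟩, hsF⟩
      rw [mem_singleton_iff, le_antisymm hs.2 this]
    · rintro _ rfl
      exact ⟨⟨t, ⟨hut.le, le_rfl⟩, rfl⟩, htF⟩
  · have htv : t < v := lt_of_le_of_ne ht.2 fun h => hne (by rw [h])
    refine ⟨f '' Icc t v, image hfc hfi hut.le htv le_rfl, ?_, ?_⟩
    · rw [← image_union, Icc_union_Icc_eq_Icc hut.le htv.le]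
    · rw [← hfi.image_inter (Icc_subset_Icc_right htv.le) (Icc_subset_Icc_left hut.le),
        Icc_inter_Icc_eq_singleton hut.le htv.le, image_singleton]

lemma exists_interior (h : IsArc A a b) : ∃ c ∈ A, c ≠ a ∧ c ≠ b := by
  obtain ⟨f, u, v, huv, hfc, hfi, rfl, rfl, rfl⟩ := h
  have hm : (u + v) / 2 ∈ Icc u v := ⟨by linarith, by linarith⟩
  refine ⟨f ((u + v) / 2), ⟨_, hm, rfl⟩, fun h => ?_, fun h => ?_⟩
  · have := hfi hm (left_mem_Icc.2 huv.le) h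
    linarith
  · have := hfi hm (right_mem_Icc.2 huv.le) h
    linarith

lemma joinedIn (h : IsArc A a b) : JoinedIn A a b := by
  obtain ⟨f, hc, -, ha, hb, rfl⟩ := h.exists_param (zero_lt_one (α := ℝ))
  exact JoinedIn.ofLine hc ha hb Subset.rfl

/-- The subarc between two given points, in one of the two possible orders along the arc. -/
lemma exists_between (h : IsArc A a b) (hc : c ∈ A) (hca : c ≠ a) (hcb : c ≠ b)
    (hd : d ∈ A) (hda : d ≠ a) (hdb : d ≠ b) (hcd : c ≠ d) :
    (∃ A₁ A₂ A₃, IsArc A₁ a c ∧ IsArc A₂ c d ∧ IsArc A₃ d b ∧ A₁ ⊆ A ∧ A₂ ⊆ A ∧ A₃ ⊆ A ∧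
      A₁ ∩ A₃ = ∅) ∨
    (∃ A₁ A₂ A₃, IsArc A₁ a d ∧ IsArc A₂ d c ∧ IsArc A₃ c b ∧ A₁ ⊆ A ∧ A₂ ⊆ A ∧ A₃ ⊆ A ∧
      A₁ ∩ A₃ = ∅) := by
  obtain ⟨f, u, v, huv, hfc, hfi, rfl, rfl, rfl⟩ := h
  have key : ∀ s t, s ∈ Icc u v → t ∈ Icc u v → s < t → f s ≠ f u → f t ≠ f v →
      ∃ A₁ A₂ A₃, IsArc A₁ (f u) (f s) ∧ IsArc A₂ (f s) (f t) ∧ IsArc A₃ (f t) (f v) ∧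
      A₁ ⊆ f '' Icc u v ∧ A₂ ⊆ f '' Icc u v ∧ A₃ ⊆ f '' Icc u v ∧ A₁ ∩ A₃ = ∅ := by
    intro s t hs ht hst hsu htv
    have hus : u < s := lt_of_le_of_ne hs.1 fun h => hsu (by rw [h])
    have htv : t < v := lt_of_le_of_ne ht.2 fun h => htv (by rw [h])
    refine ⟨_, _, _, image hfc hfi le_rfl hus hs.2, image hfc hfi hs.1 hst ht.2,
      image hfc hfi ht.1 htv le_rfl, image_mono (Icc_subset_Icc_right hs.2),
      image_mono (Icc_subset_Icc hs.1 ht.2), image_mono (Icc_subset_Icc_left ht.1), ?_⟩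
    rw [← hfi.image_inter (Icc_subset_Icc_right hs.2) (Icc_subset_Icc_left ht.1),
      image_eq_empty, eq_empty_iff_forall_notMem]
    rintro z ⟨hz1, hz2⟩
    linarith [hz1.2, hz2.1]
  obtain ⟨s, hs, rfl⟩ := hc
  obtain ⟨t, ht, rfl⟩ := hd
  rcases lt_trichotomy s t with h | h | h
  · exact Or.inl (key s t hs ht h hca hdb)
  · exact absurd (by rw [h]) hcd
  · exact Or.inr (key t s ht hs h hda hcb)

end IsArc

section Jordan

variable {X : Type} [MetricSpace X] {A B J : Set X} {a b c : X}

lemma isJordanCurve_of_loop {k : ℝ → X} (hc : ContinuousOn k (Icc 0 1)) (hi : InjOn k (Ico 0 1))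
    (h01 : k 0 = k 1) : IsJordanCurve (k '' Icc 0 1) := by
  have : Fact ((0 : ℝ) < 1) := ⟨one_pos⟩
  let F : AddCircle (1 : ℝ) → X := AddCircle.liftIco 1 0 k
  have hFc : Continuous F := AddCircle.liftIco_zero_continuous h01 hc
  have hrep : ∀ z : AddCircle (1 : ℝ), ∃ t ∈ Ico (0 : ℝ) 1, (t : AddCircle (1 : ℝ)) = z := by
    intro z
    obtain ⟨t, ht⟩ := (AddCircle.equivIco 1 0).symm.surjective z
    exact ⟨t.1, by simpa using t.2, by rw [← ht]; rfl⟩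
  have hFv : ∀ t ∈ Ico (0 : ℝ) 1, F t = k t := fun t ht => AddCircle.liftIco_zero_coe_apply ht
  have hFi : Function.Injective F := by
    intro y z hyz
    obtain ⟨s, hs, rfl⟩ := hrep y
    obtain ⟨t, ht, rfl⟩ := hrep z
    rw [hFv s hs, hFv t ht] at hyz
    rw [hi hs ht hyz]
  have hR : range F = k '' Icc 0 1 := by
    apply Subset.antisymm
    · rintro _ ⟨z, rfl⟩
      obtain ⟨t, ht, rfl⟩ := hrep z
      exact ⟨t, ⟨ht.1, ht.2.le⟩, (hFv t ht).symm⟩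
    · rintro _ ⟨t, ht, rfl⟩
      rcases ht.2.eq_or_lt with rfl | h
      · exact ⟨((0 : ℝ) : AddCircle (1 : ℝ)), by rw [hFv 0 ⟨le_rfl, one_pos⟩, h01]⟩
      · exact ⟨t, hFv t ⟨ht.1, h⟩⟩
  have hemb := (hFc.isClosedEmbedding hFi).isEmbedding
  exact ⟨hemb.toHomeomorph.trans (Homeomorph.setCongr hR)⟩

lemma isJordanCurve_union (hA : IsArc A a b) (hB : IsArc B a b) (hAB : A ∩ B ⊆ {a, b}) :
    IsJordanCurve (A ∪ B) := by
  have hne := hA.ne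
  obtain ⟨f, hfc, hfi, hfa, hfb, rfl⟩ := hA.exists_param (show (0 : ℝ) < 1 / 2 by norm_num)
  obtain ⟨g, hgc, hgi, hgb, hga, rfl⟩ := hB.symm.exists_param (show (1 / 2 : ℝ) < 1 by norm_num)
  let k : ℝ → X := fun t => if t ≤ 1 / 2 then f t else g t
  have hkf : EqOn k f (Icc 0 (1 / 2)) := fun t ht => if_pos ht.2
  have hkg : EqOn k g (Icc (1 / 2) 1) := fun t ht => by
    rcases ht.1.eq_or_lt with h | h
    · simp only [k, ← h, le_refl, if_true, hfb, hgb]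
    · exact if_neg h.not_ge
  have hU : Icc (0 : ℝ) (1 / 2) ∪ Icc (1 / 2) 1 = Icc 0 1 :=
    Icc_union_Icc_eq_Icc (by norm_num) (by norm_num)
  have himg : k '' Icc 0 1 = f '' Icc 0 (1 / 2) ∪ g '' Icc (1 / 2) 1 := by
    rw [← hU, image_union, hkf.image_eq, hkg.image_eq]
  have hk0 : k 0 = a := (hkf ⟨le_rfl, by norm_num⟩).trans hfa
  have hk1 : k 1 = a := (hkg ⟨by norm_num, le_rfl⟩).trans hga
  rw [← himg]
  refine isJordanCurve_of_loop ?_ ?_ (hk0.trans hk1.symm)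
  · rw [← hU]
    exact (hfc.congr hkf).union_of_isClosed (hgc.congr hkg) isClosed_Icc isClosed_Icc
  · have key : ∀ s ∈ Icc (0 : ℝ) (1 / 2), ∀ t ∈ Ico (1 / 2 : ℝ) 1, k s = k t → s = t := by
      intro s hs t ht h
      have ht' : t ∈ Icc (1 / 2 : ℝ) 1 := ⟨ht.1, ht.2.le⟩
      rw [hkf hs, hkg ht'] at h
      rcases hAB ⟨⟨s, hs, rfl⟩, ⟨t, ht', h.symm⟩⟩ with e | e
      · have := hgi ht' ⟨by norm_num, le_rfl⟩ ((h.symm.trans e).trans hga.symm)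
        linarith [ht.2]
      · have h1 := hfi hs ⟨by norm_num, le_rfl⟩ (e.trans hfb.symm)
        have h2 := hgi ht' ⟨le_rfl, by norm_num⟩ ((h.symm.trans e).trans hgb.symm)
        rw [h1, h2]
    intro s hs t ht h
    rcases le_total s (1 / 2) with hs2 | hs2 <;> rcases le_total t (1 / 2) with ht2 | ht2
    · rw [hkf ⟨hs.1, hs2⟩, hkf ⟨ht.1, ht2⟩] at h
      exact hfi ⟨hs.1, hs2⟩ ⟨ht.1, ht2⟩ h
    · exact key s ⟨hs.1, hs2⟩ t ⟨ht2, ht.2⟩ h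
    · exact (key t ⟨ht.1, ht2⟩ s ⟨hs2, hs.2⟩ h.symm).symm
    · rw [hkg ⟨hs2, hs.2.le⟩, hkg ⟨ht2, ht.2.le⟩] at h
      exact hgi ⟨hs2, hs.2.le⟩ ⟨ht2, ht.2.le⟩ h

lemma IsJordanCurve.isClosed (hJ : IsJordanCurve J) : IsClosed J := by
  obtain ⟨e⟩ := hJ
  have : Fact ((0 : ℝ) < 1) := ⟨one_pos⟩
  have : CompactSpace J := e.compactSpace
  exact (isCompact_iff_compactSpace.2 this).isClosed

lemma IsJordanCurve.exists_loop (hJ : IsJordanCurve J) (ha : a ∈ J) :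
    ∃ k : ℝ → X, Continuous k ∧ InjOn k (Ico 0 1) ∧ k 0 = a ∧ k 1 = a ∧ k '' Icc 0 1 = J := by
  have : Fact ((0 : ℝ) < 1) := ⟨one_pos⟩
  obtain ⟨e⟩ := hJ
  obtain ⟨θ, hθ⟩ := e.surjective ⟨a, ha⟩
  let k : ℝ → X := fun t => (e ((t : AddCircle (1 : ℝ)) + θ)).1
  have hinj : InjOn k (Ico 0 1) := by
    intro s hs t ht h
    have h1 : (s : AddCircle (1 : ℝ)) = t := add_right_cancel (e.injective (Subtype.ext h))
    have := congrArg (AddCircle.equivIco 1 0) h1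
    rw [AddCircle.equivIco_coe_eq (by simpa using hs),
      AddCircle.equivIco_coe_eq (by simpa using ht)] at this
    exact congrArg Subtype.val this
  have h0 : k 0 = a := by simp [k, hθ]
  have h1 : k 1 = a := by
    have : ((1 : ℝ) : AddCircle (1 : ℝ)) = 0 := AddCircle.coe_period 1
    simp only [k, this, zero_add, hθ]
  refine ⟨k, ?_, hinj, h0, h1, ?_⟩
  · exact continuous_subtype_val.comp (e.continuous.comp
      ((AddCircle.continuous_mk' 1).add continuous_const))
  · apply Subset.antisymm
    · rintro _ ⟨t, -, rfl⟩
      exact (e _).2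
    · intro x hx
      obtain ⟨z, hz⟩ := e.surjective ⟨x, hx⟩
      obtain ⟨t, ht⟩ := (AddCircle.equivIco 1 0).symm.surjective (z - θ)
      have ht' : ((t.1 : ℝ) : AddCircle (1 : ℝ)) = z - θ := by rw [← ht]; rfl
      have htI : t.1 ∈ Ico (0 : ℝ) 1 := by simpa using t.2
      refine ⟨t.1, ⟨htI.1, htI.2.le⟩, ?_⟩
      simp only [k, ht', sub_add_cancel, hz]

lemma IsJordanCurve.exists_arcs (hJ : IsJordanCurve J) (ha : a ∈ J) (hb : b ∈ J) (hab : a ≠ b) :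
    ∃ A B, IsArc A a b ∧ IsArc B a b ∧ A ∪ B = J ∧ A ∩ B ⊆ {a, b} := by
  obtain ⟨k, hkc, hki, hk0, hk1, rfl⟩ := hJ.exists_loop ha
  obtain ⟨τ, hτ, rfl⟩ := hb
  have hτ0 : 0 < τ := lt_of_le_of_ne hτ.1 fun h => hab (by rw [← h, hk0])
  have hτ1 : τ < 1 := lt_of_le_of_ne hτ.2 fun h => hab (by rw [h, hk1])
  have hz : ∀ t ∈ Ico (0 : ℝ) 1, k t = a → t = 0 := fun t ht h =>
    hki ht ⟨le_rfl, one_pos⟩ (h.trans hk0.symm)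
  refine ⟨k '' Icc 0 τ, k '' Icc τ 1, ?_, ?_, ?_, ?_⟩
  · exact ⟨k, 0, τ, hτ0, hkc.continuousOn, hki.mono (Icc_subset_Ico_right hτ1),
      hk0, rfl, rfl⟩
  · refine IsArc.symm ⟨k, τ, 1, hτ1, hkc.continuousOn, ?_, rfl, hk1, rfl⟩
    intro s hs t ht h
    rcases hs.2.eq_or_lt with rfl | hs1 <;> rcases ht.2.eq_or_lt with rfl | ht1
    · rfl
    · have := hz t ⟨hτ0.le.trans ht.1, ht1⟩ (h.symm.trans hk1)
      linarith [ht.1]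
    · have := hz s ⟨hτ0.le.trans hs.1, hs1⟩ (h.trans hk1)
      linarith [hs.1]
    · exact hki ⟨hτ0.le.trans hs.1, hs1⟩ ⟨hτ0.le.trans ht.1, ht1⟩ h
  · rw [← image_union, Icc_union_Icc_eq_Icc hτ0.le hτ1.le]
  · rintro _ ⟨⟨s, hs, rfl⟩, ⟨t, ht, h⟩⟩
    rcases ht.2.eq_or_lt with rfl | ht1
    · exact Or.inl (h.symm.trans hk1)
    · have := hki ⟨hτ0.le.trans ht.1, ht1⟩ ⟨hs.1, hs.2.trans_lt hτ1⟩ h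
      exact Or.inr (by rw [mem_singleton_iff, le_antisymm hs.2 (this ▸ ht.1)])

lemma IsJordanCurve.exists_arc_through (hJ : IsJordanCurve J) (ha : a ∈ J) (hb : b ∈ J)
    (hab : a ≠ b) (hc : c ∈ J) : ∃ A ⊆ J, IsArc A a b ∧ c ∈ A := by
  obtain ⟨A, B, hA, hB, rfl, -⟩ := hJ.exists_arcs ha hb hab
  rcases hc with hc | hc
  · exact ⟨A, subset_union_left, hA, hc⟩
  · exact ⟨B, subset_union_right, hB, hc⟩

lemma IsJordanCurve.exists_arc_avoiding (hJ : IsJordanCurve J) (ha : a ∈ J) (hb : b ∈ J)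
    (hab : a ≠ b) (hca : c ≠ a) (hcb : c ≠ b) : ∃ A ⊆ J, IsArc A a b ∧ c ∉ A := by
  obtain ⟨A, B, hA, hB, rfl, hAB⟩ := hJ.exists_arcs ha hb hab
  by_cases hc : c ∈ A
  · refine ⟨B, subset_union_right, hB, fun hcB => ?_⟩
    rcases hAB ⟨hc, hcB⟩ with h | h
    · exact hca h
    · exact hcb h
  · exact ⟨A, subset_union_left, hA, hc⟩

lemma IsJordanCurve.exists_ne (hJ : IsJordanCurve J) (x : X) : ∃ y ∈ J, y ≠ x := by
  have : Fact ((0 : ℝ) < 1) := ⟨one_pos⟩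
  by_contra! h
  obtain ⟨e⟩ := hJ
  have : (((1 / 2 : ℝ)) : AddCircle (1 : ℝ)) = ((0 : ℝ) : AddCircle (1 : ℝ)) :=
    e.injective (Subtype.ext ((h _ (e _).2).trans (h _ (e _).2).symm))
  have := congrArg (AddCircle.equivIco 1 0) this
  rw [AddCircle.equivIco_coe_eq (by norm_num), AddCircle.equivIco_coe_eq (by norm_num)] at this
  have := congrArg Subtype.val this
  norm_num at this

end Jordan

section Cyclic

variable {X : Type} [MetricSpace X] {C K T : Set X} {a b q : X}

lemma IsJordanCurve.cyclicallyConnected {J : Set X} (hJ : IsJordanCurve J) :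
    CyclicallyConnected J := fun _ hx _ hy => ⟨J, Subset.rfl, hJ, hx, hy⟩

lemma CyclicallyConnected.exists_arc_through (hC : CyclicallyConnected C) (ha : a ∈ C)
    (hb : b ∈ C) (hab : a ≠ b) (hq : q ∈ C) : ∃ A ⊆ C, IsArc A a b ∧ q ∈ A := by
  obtain ⟨J, hJC, hJ, haJ, hqJ⟩ := hC a ha q hq
  by_cases hbJ : b ∈ J
  · obtain ⟨A, hAJ, hA, hqA⟩ := hJ.exists_arc_through haJ hbJ hab hqJ
    exact ⟨A, hAJ.trans hJC, hA, hqA⟩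
  by_cases haq : a = q
  · obtain ⟨J', hJC', hJ', haJ', hbJ'⟩ := hC a ha b hb
    obtain ⟨A, hAJ, hA, hqA⟩ := hJ'.exists_arc_through haJ' hbJ' hab haJ'
    exact ⟨A, hAJ.trans hJC', hA, haq ▸ hqA⟩
  have hbq : b ≠ q := fun h => hbJ (h ▸ hqJ)
  obtain ⟨L, hLC, hL, hbL, hqL⟩ := hC b hb q hq
  obtain ⟨L₁, L₂, hL₁, hL₂, rfl, hLL⟩ := hL.exists_arcs hbL hqL hbq
  obtain ⟨c₁, hc₁, B₁, hB₁L, hB₁, hB₁J, -⟩ :=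
    hL₁.exists_first_hit hJ.isClosed ⟨q, hL₁.right_mem, hqJ⟩ hbJ
  obtain ⟨c₂, hc₂, B₂, hB₂L, hB₂, hB₂J, -⟩ :=
    hL₂.exists_first_hit hJ.isClosed ⟨q, hL₂.right_mem, hqJ⟩ hbJ
  have key : ∀ c B, c ∈ J → B ⊆ L₁ ∪ L₂ → IsArc B b c → B ∩ J = {c} → c ≠ a →
      ∃ A ⊆ C, IsArc A a b ∧ q ∈ A := by
    intro c B hc hBL hB hBJ hca
    obtain ⟨A, hAJ, hA, hqA⟩ := hJ.exists_arc_through haJ hc hca.symm hqJ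
    refine ⟨A ∪ B, union_subset (hAJ.trans hJC) (hBL.trans hLC), hA.join hB.symm ?_, Or.inl hqA⟩
    rintro x ⟨hxA, hxB⟩
    rw [← hBJ]
    exact ⟨hxB, hAJ hxA⟩
  by_cases h1 : c₁ = a
  · by_cases h2 : c₂ = a
    · have : a ∈ L₁ ∩ L₂ := ⟨hB₁L (h1 ▸ hB₁.right_mem), hB₂L (h2 ▸ hB₂.right_mem)⟩
      rcases hLL this with h | h
      · exact absurd h hab
      · exact absurd h haq
    · exact key c₂ B₂ hc₂ (hB₂L.trans subset_union_right) hB₂ hB₂J h2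
  · exact key c₁ B₁ hc₁ (hB₁L.trans subset_union_left) hB₁ hB₁J h1

lemma CyclicallyConnected.exists_arc (hC : CyclicallyConnected C) (ha : a ∈ C)
    (hb : b ∈ C) (hab : a ≠ b) : ∃ A ⊆ C, IsArc A a b := by
  obtain ⟨A, hA, h, -⟩ := hC.exists_arc_through ha hb hab ha
  exact ⟨A, hA, h⟩

lemma CyclicallyConnected.union_ear (hK : CyclicallyConnected K) {E : Set X} (hE : IsArc E a b)
    (ha : a ∈ K) (hb : b ∈ K) (hEK : E ∩ K ⊆ {a, b}) : CyclicallyConnected (K ∪ E) := by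
  have key : ∀ A ⊆ K, IsArc A a b → IsJordanCurve (A ∪ E) := fun A hAK hA =>
    isJordanCurve_union hA hE fun x hx => hEK ⟨hx.2, hAK hx.1⟩
  have key2 : ∀ x ∈ K, ∀ y ∈ E, ∃ J ⊆ K ∪ E, IsJordanCurve J ∧ x ∈ J ∧ y ∈ J := by
    intro x hx y hy
    obtain ⟨A, hAK, hA, hxA⟩ := hK.exists_arc_through ha hb hE.ne hx
    exact ⟨_, union_subset_union_left _ hAK, key A hAK hA, Or.inl hxA, Or.inr hy⟩
  rintro x (hx | hx) y (hy | hy)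
  · obtain ⟨J, hJK, h⟩ := hK x hx y hy
    exact ⟨J, hJK.trans subset_union_left, h⟩
  · exact key2 x hx y hy
  · obtain ⟨J, h1, h2, h3, h4⟩ := key2 y hy x hx
    exact ⟨J, h1, h2, h4, h3⟩
  · obtain ⟨A, hAK, hA⟩ := hK.exists_arc ha hb hE.ne
    exact ⟨_, union_subset_union_left _ hAK, key A hAK hA, Or.inr hx, Or.inr hy⟩

lemma IsArc.exists_gap {E : Set X} (hE : IsArc E a b) (hK : IsClosed K) (ha : a ∈ K) (hb : b ∈ K)
    {y : X} (hy : y ∈ E) (hyK : y ∉ K) : ∃ G ⊆ E, ∃ c ∈ K, ∃ d ∈ K, IsArc G c d ∧ y ∈ G ∧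
      G ∩ K ⊆ {c, d} := by
  obtain ⟨E₁, E₂, hE₁, hE₂, rfl, hE₁₂⟩ := hE.split hy (fun h => hyK (h ▸ ha))
    (fun h => hyK (h ▸ hb))
  obtain ⟨c, hc, G₁, hG₁E, hG₁, hG₁K, -⟩ :=
    hE₁.symm.exists_first_hit hK ⟨a, hE₁.left_mem, ha⟩ hyK
  obtain ⟨d, hd, G₂, hG₂E, hG₂, hG₂K, -⟩ :=
    hE₂.exists_first_hit hK ⟨b, hE₂.right_mem, hb⟩ hyK
  refine ⟨G₁ ∪ G₂, union_subset_union hG₁E hG₂E, c, hc, d, hd, hG₁.symm.join hG₂ ?_,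
    Or.inl hG₁.left_mem, ?_⟩
  · rw [← hE₁₂]
    exact inter_subset_inter hG₁E hG₂E
  · rw [union_inter_distrib_right, hG₁K, hG₂K]
    rintro x (rfl | rfl) <;> simp

lemma CyclicallyConnected.exists_gap_union (hK : CyclicallyConnected K) (hKc : IsClosed K)
    {E : Set X} (hE : IsArc E a b) (ha : a ∈ K) (hb : b ∈ K) {y : X} (hy : y ∈ E) :
    ∃ K', IsClosed K' ∧ CyclicallyConnected K' ∧ K ⊆ K' ∧ K' ⊆ K ∪ E ∧ y ∈ K' := by
  by_cases hyK : y ∈ K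
  · exact ⟨K, hKc, hK, Subset.rfl, subset_union_left, hyK⟩
  obtain ⟨G, hGE, c, hc, d, hd, hG, hyG, hGK⟩ := hE.exists_gap hKc ha hb hy hyK
  exact ⟨K ∪ G, hKc.union hG.isClosed, hK.union_ear hG hc hd hGK, subset_union_left,
    union_subset_union_right _ hGE, Or.inr hyG⟩

lemma CyclicallyConnected.union_arc_of_isClosed (hK : CyclicallyConnected K) (hKc : IsClosed K)
    {E : Set X} (hE : IsArc E a b) (ha : a ∈ K) (hb : b ∈ K) : CyclicallyConnected (K ∪ E) := by
  have key : ∀ x ∈ K ∪ E, ∀ K' : Set X, IsClosed K' → CyclicallyConnected K' → K ⊆ K' →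
      K' ⊆ K ∪ E → ∃ K'', IsClosed K'' ∧ CyclicallyConnected K'' ∧ K' ⊆ K'' ∧ K'' ⊆ K ∪ E ∧
        x ∈ K'' := by
    rintro x (hx | hx) K' hc' h' hKK' hK'E
    · exact ⟨K', hc', h', Subset.rfl, hK'E, hKK' hx⟩
    · obtain ⟨K'', h1, h2, h3, h4, h5⟩ := h'.exists_gap_union hc' hE (hKK' ha) (hKK' hb) hx
      exact ⟨K'', h1, h2, h3, h4.trans (union_subset hK'E subset_union_right), h5⟩
  intro x hx y hy
  obtain ⟨K', hc', h', hKK', hK'E, hxK'⟩ := key x hx K hKc hK Subset.rfl subset_union_left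
  obtain ⟨K'', hc'', h'', hKK'', hK''E, hyK''⟩ := key y hy K' hc' h' hKK' hK'E
  obtain ⟨J, hJ, h⟩ := h'' x (hKK'' hxK') y hyK''
  exact ⟨J, hJ.trans hK''E, h⟩

lemma CyclicallyConnected.exists_isClosed_subset (hC : CyclicallyConnected C) (ha : a ∈ C)
    (hb : b ∈ C) (hab : a ≠ b) (hq : q ∈ C) :
    ∃ K ⊆ C, IsClosed K ∧ CyclicallyConnected K ∧ a ∈ K ∧ b ∈ K ∧ q ∈ K := by
  obtain ⟨J, hJC, hJ, haJ, hbJ⟩ := hC a ha b hb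
  obtain ⟨L, hLC, hL, hqL⟩ := hC.exists_arc_through ha hb hab hq
  exact ⟨J ∪ L, union_subset hJC hLC, hJ.isClosed.union hL.isClosed,
    hJ.cyclicallyConnected.union_arc_of_isClosed hJ.isClosed hL haJ hbJ, Or.inl haJ, Or.inl hbJ,
    Or.inr hqL⟩

lemma CyclicallyConnected.union_arc (hC : CyclicallyConnected C) {E : Set X} (hE : IsArc E a b)
    (ha : a ∈ C) (hb : b ∈ C) : CyclicallyConnected (C ∪ E) := by
  have key : ∀ K ⊆ C, IsClosed K → CyclicallyConnected K → a ∈ K → b ∈ K →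
      ∀ x ∈ K ∪ E, ∀ y ∈ K ∪ E, ∃ J ⊆ C ∪ E, IsJordanCurve J ∧ x ∈ J ∧ y ∈ J := by
    intro K hKC hKc hK haK hbK x hx y hy
    obtain ⟨J, hJ, h⟩ := hK.union_arc_of_isClosed hKc hE haK hbK x hx y hy
    exact ⟨J, hJ.trans (union_subset_union_left _ hKC), h⟩
  rintro x (hx | hx) y (hy | hy)
  · obtain ⟨J, hJK, h⟩ := hC x hx y hy
    exact ⟨J, hJK.trans subset_union_left, h⟩
  · obtain ⟨K, hKC, hKc, hK, haK, hbK, hxK⟩ := hC.exists_isClosed_subset ha hb hE.ne hx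
    exact key K hKC hKc hK haK hbK x (Or.inl hxK) y (Or.inr hy)
  · obtain ⟨K, hKC, hKc, hK, haK, hbK, hyK⟩ := hC.exists_isClosed_subset ha hb hE.ne hy
    exact key K hKC hKc hK haK hbK x (Or.inr hx) y (Or.inl hyK)
  · obtain ⟨K, hKC, hKc, hK, haK, hbK, -⟩ := hC.exists_isClosed_subset ha hb hE.ne ha
    exact key K hKC hKc hK haK hbK x (Or.inr hx) y (Or.inr hy)

lemma CyclicallyConnected.union {D : Set X} (hC : CyclicallyConnected C)
    (hD : CyclicallyConnected D) (haC : a ∈ C) (hbC : b ∈ C) (haD : a ∈ D) (hbD : b ∈ D)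
    (hab : a ≠ b) : CyclicallyConnected (C ∪ D) := by
  have key : ∀ x ∈ C, ∀ y ∈ D, ∃ J ⊆ C ∪ D, IsJordanCurve J ∧ x ∈ J ∧ y ∈ J := by
    intro x hx y hy
    obtain ⟨L, hLD, hL, hyL⟩ := hD.exists_arc_through haD hbD hab hy
    obtain ⟨J, hJ, h⟩ := hC.union_arc hL haC hbC x (Or.inl hx) y (Or.inr hyL)
    exact ⟨J, hJ.trans (union_subset_union_right _ hLD), h⟩
  rintro x (hx | hx) y (hy | hy)
  · obtain ⟨J, hJK, h⟩ := hC x hx y hy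
    exact ⟨J, hJK.trans subset_union_left, h⟩
  · exact key x hx y hy
  · obtain ⟨J, h1, h2, h3, h4⟩ := key y hy x hx
    exact ⟨J, h1, h2, h4, h3⟩
  · obtain ⟨J, hJK, h⟩ := hD x hx y hy
    exact ⟨J, hJK.trans subset_union_right, h⟩

lemma CyclicallyConnected.sUnion {c : Set (Set X)} (hc : ∀ C ∈ c, CyclicallyConnected C)
    (hchain : IsChain (· ⊆ ·) c) : CyclicallyConnected (⋃₀ c) := by
  rintro x ⟨C, hC, hxC⟩ y ⟨D, hD, hyD⟩
  rcases hchain.total hC hD with h | h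
  · obtain ⟨J, hJ, hJp⟩ := hc D hD x (h hxC) y hyD
    exact ⟨J, hJ.trans (subset_sUnion_of_mem hD), hJp⟩
  · obtain ⟨J, hJ, hJp⟩ := hc C hC x hxC y (h hyD)
    exact ⟨J, hJ.trans (subset_sUnion_of_mem hC), hJp⟩

/-- Cyclicly connected subsets of `S` extend to maximal cyclicly connected subsets of `S`. -/
lemma CyclicallyConnected.exists_maximal (hC : CyclicallyConnected C) {S : Set X} (hCS : C ⊆ S) :
    ∃ T, C ⊆ T ∧ T ⊆ S ∧ CyclicallyConnected T ∧
      ∀ D ⊆ S, CyclicallyConnected D → T ⊆ D → D = T := by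
  obtain ⟨T, hCT, hT⟩ := zorn_subset_nonempty {C | C ⊆ S ∧ CyclicallyConnected C}
    (fun c hcS hc _ => ⟨⋃₀ c, ⟨sUnion_subset fun D hD => (hcS hD).1,
      CyclicallyConnected.sUnion (fun D hD => (hcS hD).2) hc⟩,
      fun D hD => subset_sUnion_of_mem hD⟩) C ⟨hCS, hC⟩
  exact ⟨T, hCT, hT.1.1, hT.1.2, fun D hDS hD hTD => (hT.2 ⟨hDS, hD⟩ hTD).antisymm hTD⟩

lemma CyclicallyConnected.exists_maximalCyclic (hC : CyclicallyConnected C) (hne : C.Nonempty) :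
    ∃ T, C ⊆ T ∧ MaximalCyclic T := by
  obtain ⟨T, hCT, -, hT, hmax⟩ := hC.exists_maximal (subset_univ C)
  refine ⟨T, hCT, fun hsub => ?_, hT, fun D hD hTD => hmax D (subset_univ _) hD hTD⟩
  obtain ⟨x, hx⟩ := hne
  obtain ⟨J, hJT, hJ, -⟩ := hT x (hCT hx) x (hCT hx)
  obtain ⟨y, hy, hyx⟩ := hJ.exists_ne x
  exact hyx (hsub (hJT hy) (hCT hx))

lemma MaximalCyclic.arc_subset (hT : MaximalCyclic T) {A : Set X} (hA : IsArc A a b)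
    (ha : a ∈ T) (hb : b ∈ T) : A ⊆ T := by
  rw [← hT.2.2 _ (hT.2.1.union_arc hA ha hb) subset_union_left]
  exact subset_union_right

lemma MaximalCyclic.subset_of_mem (hT : MaximalCyclic T) (hC : CyclicallyConnected C)
    (ha : a ∈ T) (hb : b ∈ T) (haC : a ∈ C) (hbC : b ∈ C) (hab : a ≠ b) : C ⊆ T := by
  rw [← hT.2.2 _ (hT.2.1.union hC ha hb haC hbC hab) subset_union_left]
  exact subset_union_right

lemma MaximalCyclic.eq_of_mem {T' : Set X} (hT : MaximalCyclic T) (hT' : MaximalCyclic T')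
    (ha : a ∈ T) (hb : b ∈ T) (ha' : a ∈ T') (hb' : b ∈ T') (hab : a ≠ b) : T = T' :=
  (hT'.subset_of_mem hT.2.1 ha' hb' ha hb hab).antisymm
    (hT.subset_of_mem hT'.2.1 ha hb ha' hb' hab)

lemma MaximalCyclic.joinedIn_inter [CompactSpace X] (hT : MaximalCyclic T) {M : Set X}
    (h : JoinedIn M a b) (ha : a ∈ T) (hb : b ∈ T) : JoinedIn (T ∩ M) a b := by
  by_cases hab : a = b
  · subst hab
    exact JoinedIn.refl ⟨ha, h.source_mem⟩
  · obtain ⟨A, hAM, hA⟩ := h.exists_isArc hab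
    exact hA.joinedIn.mono (subset_inter (hT.arc_subset hA ha hb) hAM)

end Cyclic

section Closed

variable {X : Type} [MetricSpace X] {A T : Set X} {a b p : X}

lemma IsArc.isPreconnected (h : IsArc A a b) : IsPreconnected A := by
  obtain ⟨f, u, v, huv, hc, hi, ha, hb, rfl⟩ := h
  exact isPreconnected_Icc.image f hc

lemma IsArc.exists_first_exit (h : IsArc A a b) {g : X → ℝ} (hg : Continuous g) {r : ℝ}
    (ha : g a < r) (hr : ∃ z ∈ A, r ≤ g z) :
    ∃ c, ∃ A₁ ⊆ A, IsArc A₁ a c ∧ g c = r ∧ (∀ x ∈ A₁, g x ≤ r) ∧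
      (c ≠ b → ∃ A₂, IsArc A₂ c b ∧ A₁ ∪ A₂ = A ∧ A₁ ∩ A₂ = {c}) := by
  obtain ⟨z, hzA, hz⟩ := hr
  obtain ⟨c, hcF, A₁, hA₁A, hA₁, hA₁F, hrest⟩ := h.exists_first_hit (F := g ⁻¹' Ici r)
    (isClosed_Ici.preimage hg) ⟨z, hzA, hz⟩ (by simpa using ha)
  have hgc : g c = r := by
    by_contra hne
    have hlt : r < g c := lt_of_le_of_ne hcF (Ne.symm hne)
    obtain ⟨x, hxA, hx⟩ := hA₁.isPreconnected.intermediate_value hA₁.left_mem hA₁.right_mem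
      hg.continuousOn (show (r + g c) / 2 ∈ Icc (g a) (g c) from ⟨by linarith, by linarith⟩)
    have : x ∈ A₁ ∩ g ⁻¹' Ici r := ⟨hxA, show r ≤ g x by linarith⟩
    rw [hA₁F] at this
    rw [mem_singleton_iff.1 this] at hx
    linarith
  refine ⟨c, A₁, hA₁A, hA₁, hgc, fun x hx => ?_, hrest⟩
  by_contra! hlt
  have : x ∈ A₁ ∩ g ⁻¹' Ici r := ⟨hx, hlt.le⟩
  rw [hA₁F] at this
  rw [mem_singleton_iff.1 this] at hlt
  linarith

lemma IsArc.right_mem_closure (h : IsArc A a b) : b ∈ closure (A \ {b}) := by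
  obtain ⟨f, u, v, huv, hc, hi, rfl, rfl, rfl⟩ := h
  have hsub : f '' Ico u v ⊆ f '' Icc u v \ {f v} := by
    rintro _ ⟨t, ht, rfl⟩
    exact ⟨⟨t, ⟨ht.1, ht.2.le⟩, rfl⟩, fun h =>
      ht.2.ne (hi ⟨ht.1, ht.2.le⟩ (right_mem_Icc.2 huv.le) h)⟩
  refine closure_mono hsub ?_
  have : ContinuousWithinAt f (Ico u v) v :=
    (hc v (right_mem_Icc.2 huv.le)).mono Ico_subset_Icc_self
  refine this.mem_closure_image ?_
  rw [closure_Ico huv.ne]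
  exact right_mem_Icc.2 huv.le

/-- A parametrized arc in `T ∪ {p}` ending at `p`. -/
structure EndArc (T : Set X) (p : X) (α : ℝ → X) : Prop where
  cont : ContinuousOn α (Icc 0 1)
  inj : InjOn α (Icc 0 1)
  at_one : α 1 = p
  mem : ∀ t ∈ Ico (0 : ℝ) 1, α t ∈ T

lemma EndArc.eventually_mem {α : ℝ → X} (h : EndArc T p α) {U : Set X} (hU : U ∈ 𝓝 p) :
    ∃ s ∈ Ico (0 : ℝ) 1, ∀ t ∈ Icc s 1, α t ∈ U := by
  have h1 := h.cont 1 (right_mem_Icc.2 zero_le_one)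
  rw [ContinuousWithinAt, h.at_one] at h1
  obtain ⟨δ, hδ, hs⟩ := Metric.mem_nhdsWithin_iff.1 (h1 hU)
  refine ⟨max 0 (1 - δ / 2), ⟨le_max_left _ _, max_lt one_pos (by linarith)⟩, fun t ht => hs ?_⟩
  have h2 := (le_max_left _ _).trans ht.1
  have h3 := (le_max_right _ _).trans ht.1
  refine ⟨?_, h2, ht.2⟩
  rw [mem_ball, Real.dist_eq, abs_lt]
  constructor <;> linarith [ht.2]

lemma EndArc.exists_jordan [CompactSpace X] {α : ℝ → X} (hα : EndArc T p α) (hpT : p ∉ T)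
    {N : Set X} {s₀ c u v : ℝ} (hs₀ : 0 ≤ s₀) (hN : ∀ t ∈ Icc s₀ 1, α t ∈ N)
    (hu : u ∈ Ico s₀ c) (hv : v ∈ Ioo c 1)
    (hj : JoinedIn ((T ∩ N) \ {α c}) (α u) (α v)) :
    ∃ u' v' J, s₀ ≤ u' ∧ u' < c ∧ c < v' ∧ v' < 1 ∧ IsJordanCurve J ∧ J ⊆ T ∩ N ∧
      α '' Icc u' v' ⊆ J := by
  have hI : ∀ {s t : ℝ}, s₀ ≤ s → t ≤ 1 → Icc s t ⊆ Icc 0 1 := fun hs ht =>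
    Icc_subset_Icc (hs₀.trans hs) ht
  have hc1 : c < 1 := hv.1.trans hv.2
  have hsc : s₀ < c := hu.1.trans_lt hu.2
  have hcl : ∀ {s t : ℝ}, s₀ ≤ s → t ≤ 1 → IsClosed (α '' Icc s t) := fun hs ht =>
    (isCompact_Icc.image_of_continuousOn (hα.cont.mono (hI hs ht))).isClosed
  have hmemI : ∀ {t : ℝ}, s₀ ≤ t → t ≤ 1 → t ∈ Icc (0 : ℝ) 1 := fun h h' => ⟨hs₀.trans h, h'⟩
  have huv : α u ≠ α v := fun h => by
    have := hα.inj (hmemI hu.1 (hu.2.le.trans hc1.le)) (hmemI (hsc.le.trans hv.1.le) hv.2.le) h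
    linarith [hu.2, hv.1]
  obtain ⟨G, hGs, hG⟩ := hj.exists_isArc huv
  obtain ⟨_, ⟨u', hu', rfl⟩, G', hG'G, hG', hG'F, -⟩ := hG.symm.exists_first_hit
    (F := α '' Icc s₀ c) (hcl le_rfl hc1.le) ⟨α u, hG.left_mem, u, ⟨hu.1, hu.2.le⟩, rfl⟩ (by
      rintro ⟨t, ht, h⟩
      have := hα.inj (hmemI ht.1 (ht.2.trans hc1.le)) (hmemI (hsc.le.trans hv.1.le) hv.2.le) h
      linarith [ht.2, hv.1])
  have hu'c : u' < c := lt_of_le_of_ne hu'.2 fun h => (hGs (hG'G hG'.right_mem)).2 (by rw [h]; rfl)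
  obtain ⟨_, ⟨v', hv', rfl⟩, G'', hGG, hG'', hG''F, -⟩ := hG'.symm.exists_first_hit
    (F := α '' Icc c 1) (hcl hsc.le le_rfl) ⟨α v, hG'.left_mem, v, ⟨hv.1.le, hv.2.le⟩, rfl⟩ (by
      rintro ⟨t, ht, h⟩
      have := hα.inj (hmemI (hsc.le.trans ht.1) ht.2) (hmemI hu'.1 (hu'c.le.trans hc1.le)) h
      linarith [ht.1])
  have hG''s := hGG.trans (hG'G.trans hGs)
  have hv'c : c < v' := lt_of_le_of_ne hv'.1 fun h => (hG''s hG''.right_mem).2 (by rw [h]; rfl)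
  have hv'1 : v' < 1 := lt_of_le_of_ne hv'.2 fun h =>
    hpT (by rw [← hα.at_one, ← h]; exact (hG''s hG''.right_mem).1.1)
  have hE : IsArc (α '' Icc u' v') (α u') (α v') :=
    IsArc.image hα.cont hα.inj (hs₀.trans hu'.1) (hu'c.trans hv'c) hv'.2
  refine ⟨u', v', _, hu'.1, hu'c, hv'c, hv'1, isJordanCurve_union hE hG'' ?_, ?_,
    subset_union_left⟩
  · rintro _ ⟨⟨t, ht, rfl⟩, htG⟩
    rcases le_total t c with h | h
    · have : α t ∈ G' ∩ α '' Icc s₀ c := ⟨hGG htG, t, ⟨hu'.1.trans ht.1, h⟩, rfl⟩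
      rw [hG'F] at this
      exact Or.inl this
    · have : α t ∈ G'' ∩ α '' Icc c 1 := ⟨htG, t, ⟨h, ht.2.trans hv'.2⟩, rfl⟩
      rw [hG''F] at this
      exact Or.inr this
  · refine union_subset ?_ (hG''s.trans sdiff_subset)
    rintro _ ⟨t, ht, rfl⟩
    exact ⟨hα.mem t ⟨hs₀.trans (hu'.1.trans ht.1), ht.2.trans_lt hv'1⟩,
      hN t ⟨hu'.1.trans ht.1, ht.2.trans hv'.2⟩⟩

lemma exists_joinedIn_ball [LocallyPathConnectedSpace X] (y : X) {U : Set X} (hU : U ∈ 𝓝 y) :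
    ∃ M ∈ 𝓝 y, M ⊆ U ∧ ∀ a ∈ M, ∀ b ∈ M, JoinedIn U a b := by
  obtain ⟨V, ⟨hV, hyV⟩, hVU⟩ := (isOpen_isPathConnected_basis y).mem_iff.1 hU
  exact ⟨V, hV.mem_nhds hyV.1, hVU, fun a ha b hb => (hyV.2.joinedIn a ha b hb).mono hVU⟩

variable [CompactSpace X] [LocallyPathConnectedSpace X]

lemma MaximalCyclic.exists_endArc (hT : MaximalCyclic T) (hp : p ∈ closure T) (hpT : p ∉ T) :
    ∃ α, EndArc T p α := by
  choose M hM hMb hMj using fun n : ℕ => exists_joinedIn_ball p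
    (ball_mem_nhds p (show (0 : ℝ) < 1 / ((n : ℝ) + 1) by positivity))
  have hN : ∀ n : ℕ, ∃ x ∈ T, ∀ k ≤ n, x ∈ M k := by
    intro n
    have : (⋂ k ∈ Finset.range (n + 1), M k) ∈ 𝓝 p :=
      (Filter.biInter_finset_mem _).2 fun k _ => hM k
    obtain ⟨x, hx, hxT⟩ := mem_closure_iff_nhds.1 hp _ this
    refine ⟨x, hxT, fun k hk => ?_⟩
    exact mem_iInter₂.1 hx k (Finset.mem_range.2 (by omega))
  choose x hxT hxM using hN
  have hj := joinedIn_of_tendsto (p := p) (x := x) (S := fun n => T ∩ ball p (1 / ((n : ℝ) + 1)))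
    tendsto_one_div_add_atTop_nhds_zero_nat
    (fun n => inter_subset_right.trans ball_subset_closedBall)
    (fun n => hT.joinedIn_inter (hMj n _ (hxM n n le_rfl) _ (hxM (n + 1) n (by omega)))
      (hxT n) (hxT (n + 1)))
  obtain ⟨A, hAs, hA⟩ := hj.exists_isArc (fun h => hpT (h ▸ hxT 0))
  obtain ⟨α, hc, hi, h0, h1, rfl⟩ := hA.exists_param (zero_lt_one (α := ℝ))
  refine ⟨α, hc, hi, h1, fun t ht => ?_⟩
  rcases hAs ⟨t, ⟨ht.1, ht.2.le⟩, rfl⟩ with h | h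
  · obtain ⟨n, hn⟩ := mem_iUnion.1 h
    exact hn.1
  · have := hi ⟨ht.1, ht.2.le⟩ (right_mem_Icc.2 zero_le_one) (h.trans h1.symm)
    linarith [ht.2]

lemma EndArc.exists_detour {α : ℝ → X} (hα : EndArc T p α) (hT : MaximalCyclic T) (hpT : p ∉ T)
    {ε s₀ : ℝ} (hε : 0 < ε) (hs₀ : s₀ ∈ Ico (0 : ℝ) 1) :
    ∃ s ∈ Ico s₀ 1, ∀ c ∈ Ioo s 1, ∃ u ∈ Ico s₀ c, ∃ v ∈ Ioo c 1,
      JoinedIn ((T ∩ ball p ε) \ {α c}) (α u) (α v) := by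
  by_contra! hcon
  obtain ⟨s₁, hs₁, hs₁b⟩ := hα.eventually_mem (ball_mem_nhds p (show 0 < ε / 8 by positivity))
  have hinj : ∀ {s t : ℝ}, 0 ≤ s → s < t → t ≤ 1 → α s ≠ α t := fun {s t} h0 hst h1 h =>
    hst.ne (hα.inj ⟨h0, hst.le.trans h1⟩ ⟨h0.trans hst.le, h1⟩ h)
  -- an arc from beyond a bad parameter to the sphere
  have hbad : ∀ n : ℕ, ∃ c v : ℝ, ∃ y : X, ∃ G : Set X, s₁ < c ∧ s₀ < c ∧
      1 - 1 / ((n : ℝ) + 1) < c ∧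
      c < v ∧ v < 1 ∧ (∀ u ∈ Ico s₀ c, ∀ w ∈ Ioo c 1,
        ¬ JoinedIn ((T ∩ ball p ε) \ {α c}) (α u) (α w)) ∧
      IsArc G (α v) y ∧ dist y p = ε / 2 ∧ G ⊆ (T ∩ ball p ε) \ {α c} := by
    intro n
    have hn : 1 - 1 / ((n : ℝ) + 1) < 1 := by
      have : (0 : ℝ) < 1 / ((n : ℝ) + 1) := by positivity
      linarith
    obtain ⟨c, hc, hcb⟩ := hcon (max s₀ (max s₁ (1 - 1 / ((n : ℝ) + 1))))
      ⟨le_max_left _ _, max_lt hs₀.2 (max_lt hs₁.2 hn)⟩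
    have h1 : s₀ < c := (le_max_left _ _).trans_lt hc.1
    have h2 : s₁ < c := ((le_max_left _ _).trans (le_max_right _ _)).trans_lt hc.1
    have h3 : 1 - 1 / ((n : ℝ) + 1) < c :=
      ((le_max_right _ _).trans (le_max_right _ _)).trans_lt hc.1
    obtain ⟨v, hcv, hv1⟩ := exists_between hc.2
    have hs₀0 := hs₀.1
    have hvT : α v ∈ T := hα.mem v ⟨by linarith, hv1⟩
    have hsT : α s₀ ∈ T := hα.mem s₀ hs₀
    obtain ⟨J, hJT, hJ, hvJ, hsJ⟩ := hT.2.1 _ hvT _ hsT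
    obtain ⟨G, hGJ, hG, hcG⟩ := hJ.exists_arc_avoiding (c := α c) hvJ hsJ
      (hinj hs₀0 (h1.trans hcv) hv1.le).symm (hinj (by linarith) hcv hv1.le)
      (hinj hs₀0 h1 hc.2.le).symm
    have hdv : dist (α v) p < ε / 2 := by
      have := mem_ball.1 (hs₁b v ⟨by linarith, hv1.le⟩)
      linarith
    obtain ⟨y, G₁, hG₁G, hG₁, hy, hG₁b, -⟩ := hG.exists_first_exit (g := fun x => dist x p)
      (continuous_id.dist continuous_const) hdv (by
        by_contra! hlt
        refine hcb s₀ ⟨le_rfl, h1⟩ v ⟨hcv, hv1⟩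
          (hG.symm.joinedIn.mono fun x hx => ⟨⟨hJT (hGJ hx), ?_⟩, ?_⟩)
        · rw [mem_ball]
          linarith [hlt x hx]
        · rintro rfl
          exact hcG hx)
    refine ⟨c, v, y, G₁, h2, h1, h3, hcv, hv1, hcb, hG₁, hy,
      fun x hx => ⟨⟨hJT (hGJ (hG₁G hx)), ?_⟩, ?_⟩⟩
    · rw [mem_ball]
      have := hG₁b x hx
      linarith
    · rintro rfl
      exact hcG (hG₁G hx)
  choose c v y G hcs₁ hcs₀ hcn hcv hv1 hcb hG hy hGs using hbad
  have hc1 : Tendsto c atTop (𝓝 1) := by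
    have h1 : Tendsto (fun n : ℕ => 1 - 1 / ((n : ℝ) + 1)) atTop (𝓝 1) := by
      simpa using tendsto_const_nhds.sub (tendsto_one_div_add_atTop_nhds_zero_nat (𝕜 := ℝ))
    exact tendsto_of_tendsto_of_tendsto_of_le_of_le h1 tendsto_const_nhds
      (fun n => (hcn n).le) (fun n => ((hcv n).trans (hv1 n)).le)
  obtain ⟨z, -, φ, hφ, hz⟩ := isCompact_univ.tendsto_subseq (fun n => mem_univ (y n))
  have hzd : dist z p = ε / 2 := tendsto_nhds_unique (hz.dist tendsto_const_nhds)
    (by simp [hy])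
  obtain ⟨M, hM, hMb, hMj⟩ := exists_joinedIn_ball z
    (ball_mem_nhds z (show 0 < ε / 8 by positivity))
  obtain ⟨m, hm⟩ := (hz.eventually hM).exists
  have hGcl : (G (φ m))ᶜ ∈ 𝓝 p :=
    (hG (φ m)).isClosed.isOpen_compl.mem_nhds fun h => hpT (hGs _ h).1.1
  obtain ⟨s₂, hs₂, hs₂G⟩ := hα.eventually_mem hGcl
  have hcφ : Tendsto (fun n => c (φ n)) atTop (𝓝 1) := hc1.comp hφ.tendsto_atTop
  obtain ⟨n, hnM, hn1, hn2⟩ := ((hz.eventually hM).and ((hcφ.eventually (lt_mem_nhds hs₂.2)).and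
    (hcφ.eventually (lt_mem_nhds (hv1 (φ m)))))).exists
  have hyT : ∀ k, y k ∈ T := fun k => (hGs k (hG k).right_mem).1.1
  have hcl1 : c (φ n) < 1 := (hcv _).trans (hv1 _)
  refine hcb (φ n) (v (φ m)) ⟨((hcs₀ _).trans (hcv _)).le, hn2⟩ (v (φ n)) ⟨hcv _, hv1 _⟩ ?_
  have j1 : JoinedIn ((T ∩ ball p ε) \ {α (c (φ n))}) (α (v (φ m))) (y (φ m)) := by
    refine (hG (φ m)).joinedIn.mono fun x hx => ⟨(hGs _ hx).1, ?_⟩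
    rintro rfl
    exact hs₂G _ ⟨hn1.le, hcl1.le⟩ hx
  have j2 : JoinedIn ((T ∩ ball p ε) \ {α (c (φ n))}) (y (φ m)) (y (φ n)) := by
    refine (hT.joinedIn_inter (hMj _ hm _ hnM) (hyT _) (hyT _)).mono fun x hx => ?_
    have hxz := mem_ball.1 hx.2
    refine ⟨⟨hx.1, ?_⟩, ?_⟩
    · rw [mem_ball]
      linarith [dist_triangle x z p]
    · rintro rfl
      have := mem_ball.1 (hs₁b (c (φ n)) ⟨(hcs₁ _).le, hcl1.le⟩)
      linarith [dist_triangle_left z p (α (c (φ n)))]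
  exact (j1.trans j2).trans ((hG (φ n)).joinedIn.mono (hGs _)).symm

lemma EndArc.exists_cyclic_tail {α : ℝ → X} (hα : EndArc T p α) (hT : MaximalCyclic T)
    (hpT : p ∉ T) {ε : ℝ} (hε : 0 < ε) :
    ∃ C ⊆ T ∩ ball p ε, CyclicallyConnected C ∧ ∃ s ∈ Ico (0 : ℝ) 1, α '' Ioo s 1 ⊆ C := by
  obtain ⟨s₀, hs₀, hs₀b⟩ := hα.eventually_mem (ball_mem_nhds p hε)
  obtain ⟨s, hs, hdet⟩ := hα.exists_detour hT hpT hε hs₀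
  have hJ : ∀ c ∈ Ioo s 1, ∃ u v J, s₀ ≤ u ∧ u < c ∧ c < v ∧ v < 1 ∧ IsJordanCurve J ∧
      J ⊆ T ∩ ball p ε ∧ α '' Icc u v ⊆ J := by
    intro c hc
    obtain ⟨u, hu, v, hv, hj⟩ := hdet c hc
    exact hα.exists_jordan hpT hs₀.1 hs₀b hu hv hj
  choose! u v J hsu huc hcv hv1 hJ hJT hJα using hJ
  obtain ⟨c₀, hc₀⟩ : (Ioo s 1).Nonempty := nonempty_Ioo.2 hs.2
  obtain ⟨C, hJC, hCT, hC, hmax⟩ :=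
    (hJ c₀ hc₀).cyclicallyConnected.exists_maximal (hJT c₀ hc₀)
  have hov : ∀ c ∈ Ioo s 1, ∀ d ∈ Ioo s 1, ∀ z ∈ Ioo (u c) (v c), z ∈ Ioo (u d) (v d) →
      J c ⊆ C → J d ⊆ C := by
    intro c hc d hd z hz hz' hcC
    obtain ⟨w, hzw, hw⟩ := exists_between (lt_min hz.2 hz'.2)
    have hw1 := hw.trans_le (min_le_left _ _)
    have hw2 := hw.trans_le (min_le_right _ _)
    have h0 : 0 ≤ z := by linarith [hs₀.1, hsu c hc, hz.1]
    have hne : α z ≠ α w := fun h => hzw.ne (hα.inj ⟨h0, by linarith [hz.2, hv1 c hc]⟩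
      ⟨by linarith, by linarith [hv1 c hc]⟩ h)
    have hmem : ∀ e ∈ Ioo s 1, u e < z → z < v e → w < v e → α z ∈ J e ∧ α w ∈ J e :=
      fun e he h1 h2 h3 => ⟨hJα e he ⟨z, ⟨h1.le, h2.le⟩, rfl⟩,
        hJα e he ⟨w, ⟨by linarith, h3.le⟩, rfl⟩⟩
    obtain ⟨hzc, hwc⟩ := hmem c hc hz.1 hz.2 hw1
    obtain ⟨hzd, hwd⟩ := hmem d hd hz'.1 hz'.2 hw2
    rw [← hmax _ (union_subset hCT (hJT d hd))
      (hC.union (hJ d hd).cyclicallyConnected (hcC hzc) (hcC hwc) hzd hwd hne) subset_union_left]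
    exact subset_union_right
  have hall : ∀ c ∈ Ioo s 1, J c ⊆ C := by
    intro d hd
    by_contra hdC
    obtain ⟨z, -, hz1, hz2⟩ := isPreconnected_Ioo (a := s) (b := 1)
      (⋃ c : {c // c ∈ Ioo s 1 ∧ J c ⊆ C}, Ioo (u c) (v c))
      (⋃ c : {c // c ∈ Ioo s 1 ∧ ¬ J c ⊆ C}, Ioo (u c) (v c))
      (isOpen_iUnion fun _ => isOpen_Ioo) (isOpen_iUnion fun _ => isOpen_Ioo)
      (by
        intro c hc
        by_cases h : J c ⊆ C
        · exact Or.inl (mem_iUnion.2 ⟨⟨c, hc, h⟩, huc c hc, hcv c hc⟩)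
        · exact Or.inr (mem_iUnion.2 ⟨⟨c, hc, h⟩, huc c hc, hcv c hc⟩))
      ⟨c₀, hc₀, mem_iUnion.2 ⟨⟨c₀, hc₀, hJC⟩, huc c₀ hc₀, hcv c₀ hc₀⟩⟩
      ⟨d, hd, mem_iUnion.2 ⟨⟨d, hd, hdC⟩, huc d hd, hcv d hd⟩⟩
    obtain ⟨⟨c, hc, hcC⟩, hzc⟩ := mem_iUnion.1 hz1
    obtain ⟨⟨e, he, heC⟩, hze⟩ := mem_iUnion.1 hz2
    exact heC (hov c hc e he z hzc hze hcC)
  refine ⟨C, hCT, hC, s, ⟨hs₀.1.trans hs.1, hs.2⟩, ?_⟩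
  rintro _ ⟨c, hc, rfl⟩
  exact hall c hc (hJα c hc ⟨c, ⟨(huc c hc).le, (hcv c hc).le⟩, rfl⟩)

end Closed

section Ears

variable {X : Type} [MetricSpace X] {T : Set X} {p o : X} {α : ℝ → X}

/-- A theta-like configuration near the end of an arc: two arcs `R`, `L` leaving `o`, closed up by
an arc `D` which meets a small cyclicly connected set `C` containing the tail of `α`. -/
structure EarState (T : Set X) (p o : X) (α : ℝ → X) where
  (R L D C : Set X)
  (x y : X)
  ε : ℝ
  arcR : IsArc R o x
  arcL : IsArc L o y
  arcD : IsArc D x y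
  inter_RL : R ∩ L ⊆ {o}
  inter_DR : D ∩ R ⊆ {x}
  inter_DL : D ∩ L ⊆ {y}
  R_subset : R ⊆ T
  L_subset : L ⊆ T
  D_subset : D ⊆ T
  pos : 0 < ε
  R_disj : ∀ z ∈ R, z ∉ closedBall p ε
  L_disj : ∀ z ∈ L, z ∉ closedBall p ε
  C_subset : C ⊆ T ∩ ball p ε
  C_cyclic : CyclicallyConnected C
  tail : ∃ s ∈ Ico (0 : ℝ) 1, α '' Ioo s 1 ⊆ C
  two : ∃ d₁ ∈ D ∩ C, ∃ d₂ ∈ D ∩ C, d₁ ≠ d₂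

/-- The configuration `τ` refines `σ` by prolonging the two arcs along `σ.D`. -/
structure EarStep (σ τ : EarState T p o α) : Prop where
  eps : τ.ε ≤ σ.ε / 2
  R_mono : σ.R ⊆ τ.R
  L_mono : σ.L ⊆ τ.L
  joinR : JoinedIn (τ.R ∩ σ.D) σ.x τ.x
  joinL : JoinedIn (τ.L ∩ σ.D) σ.y τ.y
  D_ball : τ.D ⊆ closedBall p σ.ε

lemma EarState.exists_step_of_order (σ : EarState T p o α)
    {x' y' : X} {D' C' A₁ A₃ : Set X} {ε' : ℝ}
    (hx : x' ∈ σ.D) (hxx : x' ≠ σ.x) (hxy : x' ≠ σ.y) (hy : y' ∈ σ.D) (hyx : y' ≠ σ.x)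
    (hyy : y' ≠ σ.y) (hD' : IsArc D' x' y') (hD'J : ∀ z ∈ D', z ∈ σ.R ∪ σ.L ∪ σ.D → z = x' ∨ z = y')
    (hD'T : D' ⊆ T) (hD'b : D' ⊆ closedBall p σ.ε) (hpos : 0 < ε') (hε' : ε' ≤ σ.ε / 2)
    (hJ : ∀ z ∈ σ.R ∪ σ.L ∪ σ.D, z ∉ closedBall p ε') (hC' : C' ⊆ T ∩ ball p ε')
    (hC'c : CyclicallyConnected C') (htail : ∃ s ∈ Ico (0 : ℝ) 1, α '' Ioo s 1 ⊆ C')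
    (htwo : ∃ d₁ ∈ D' ∩ C', ∃ d₂ ∈ D' ∩ C', d₁ ≠ d₂)
    (hA₁ : IsArc A₁ σ.x x') (hA₃ : IsArc A₃ y' σ.y) (hA₁D : A₁ ⊆ σ.D) (hA₃D : A₃ ⊆ σ.D)
    (hA : A₁ ∩ A₃ = ∅) : ∃ τ, EarStep σ τ := by
  have hA' : ∀ z ∈ A₁, z ∉ A₃ := fun z h1 h3 => by
    have : z ∈ A₁ ∩ A₃ := ⟨h1, h3⟩
    simp [hA] at this
  have hDR : ∀ z ∈ σ.D, z ∈ σ.R → z = σ.x := fun z h1 h2 => σ.inter_DR ⟨h1, h2⟩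
  have hDL : ∀ z ∈ σ.D, z ∈ σ.L → z = σ.y := fun z h1 h2 => σ.inter_DL ⟨h1, h2⟩
  have hR : IsArc (σ.R ∪ A₁) o x' := σ.arcR.join hA₁ fun z hz => hDR z (hA₁D hz.2) hz.1
  have hL : IsArc (σ.L ∪ A₃) o y' := σ.arcL.join hA₃.symm fun z hz => hDL z (hA₃D hz.2) hz.1
  have hRJ : σ.R ∪ A₁ ⊆ σ.R ∪ σ.L ∪ σ.D := union_subset
    (fun z hz => Or.inl (Or.inl hz)) (fun z hz => Or.inr (hA₁D hz))
  have hLJ : σ.L ∪ A₃ ⊆ σ.R ∪ σ.L ∪ σ.D := union_subset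
    (fun z hz => Or.inl (Or.inr hz)) (fun z hz => Or.inr (hA₃D hz))
  refine ⟨⟨σ.R ∪ A₁, σ.L ∪ A₃, D', C', x', y', ε', hR, hL, hD', ?_, ?_, ?_,
    union_subset σ.R_subset (hA₁D.trans σ.D_subset),
    union_subset σ.L_subset (hA₃D.trans σ.D_subset), hD'T, hpos, fun z hz => hJ z (hRJ hz),
    fun z hz => hJ z (hLJ hz), hC', hC'c, htail, htwo⟩, hε', subset_union_left, subset_union_left,
    hA₁.joinedIn.mono fun z hz => ⟨Or.inr hz, hA₁D hz⟩,
    hA₃.symm.joinedIn.mono fun z hz => ⟨Or.inr hz, hA₃D hz⟩, hD'b⟩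
  · rintro z ⟨h1 | h1, h2 | h2⟩
    · exact σ.inter_RL ⟨h1, h2⟩
    · obtain rfl := hDR z (hA₃D h2) h1
      exact absurd h2 (hA' _ hA₁.left_mem)
    · obtain rfl := hDL z (hA₁D h1) h2
      exact absurd hA₃.right_mem (hA' _ h1)
    · exact absurd h2 (hA' _ h1)
  · rintro z ⟨h1, h2⟩
    rcases hD'J z h1 (hRJ h2) with rfl | rfl
    · rfl
    · rcases h2 with h2 | h2
      · exact absurd (hDR _ hy h2) hyx
      · exact absurd hA₃.left_mem (hA' _ h2)
  · rintro z ⟨h1, h2⟩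
    rcases hD'J z h1 (hLJ h2) with rfl | rfl
    · rcases h2 with h2 | h2
      · exact absurd (hDL _ hx h2) hxy
      · exact absurd h2 (hA' _ hA₁.right_mem)
    · rfl

lemma EarState.exists_step_of_ear (σ : EarState T p o α) {x' y' : X} {D' C' : Set X} {ε' : ℝ}
    (hx : x' ∈ σ.D) (hxx : x' ≠ σ.x) (hxy : x' ≠ σ.y) (hy : y' ∈ σ.D) (hyx : y' ≠ σ.x)
    (hyy : y' ≠ σ.y) (hD' : IsArc D' x' y') (hD'J : ∀ z ∈ D', z ∈ σ.R ∪ σ.L ∪ σ.D → z = x' ∨ z = y')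
    (hD'T : D' ⊆ T) (hD'b : D' ⊆ closedBall p σ.ε) (hpos : 0 < ε') (hε' : ε' ≤ σ.ε / 2)
    (hJ : ∀ z ∈ σ.R ∪ σ.L ∪ σ.D, z ∉ closedBall p ε') (hC' : C' ⊆ T ∩ ball p ε')
    (hC'c : CyclicallyConnected C') (htail : ∃ s ∈ Ico (0 : ℝ) 1, α '' Ioo s 1 ⊆ C')
    (htwo : ∃ d₁ ∈ D' ∩ C', ∃ d₂ ∈ D' ∩ C', d₁ ≠ d₂) : ∃ τ, EarStep σ τ := by
  rcases σ.arcD.exists_between hx hxx hxy hy hyx hyy hD'.ne with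
    ⟨A₁, -, A₃, h1, -, h3, hA1, -, hA3, hd⟩ | ⟨A₁, -, A₃, h1, -, h3, hA1, -, hA3, hd⟩
  · exact σ.exists_step_of_order hx hxx hxy hy hyx hyy hD' hD'J hD'T hD'b hpos hε' hJ hC' hC'c htail
      htwo h1 h3 hA1 hA3 hd
  · exact σ.exists_step_of_order hy hyx hyy hx hxx hxy hD'.symm (fun z h h' => (hD'J z h h').symm)
      hD'T hD'b hpos hε' hJ hC' hC'c htail htwo h1 h3 hA1 hA3 hd

lemma IsArc.exists_connector {H J C F : Set X} {w : X} {ε : ℝ} (hH : IsArc H w o)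
    (hHs : H ⊆ J ∪ C) (hJ : IsClosed J) (ho : o ∈ J) (hC : C ⊆ ball p ε) (hF : IsClosed F)
    (hw : w ∈ F) (hFJ : ∀ z ∈ F, z ∉ J) :
    ∃ x' ∈ J, ∃ f ∈ F, ∃ Q ⊆ H, IsArc Q x' f ∧ Q ∩ J ⊆ {x'} ∧ Q ∩ F ⊆ {f} ∧
      Q ⊆ closedBall p ε := by
  obtain ⟨x', hx', P, hPH, hP, hPJ, -⟩ := hH.exists_first_hit hJ ⟨o, hH.right_mem, ho⟩ (hFJ w hw)
  obtain ⟨f, hf, Q, hQP, hQ, hQF, -⟩ := hP.symm.exists_first_hit hF ⟨w, hP.left_mem, hw⟩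
    (fun h => hFJ _ h hx')
  have hPC : P \ {x'} ⊆ C := fun z hz => (hHs (hPH hz.1)).resolve_left fun h => hz.2 <| by
    have : z ∈ P ∩ J := ⟨hz.1, h⟩
    rwa [hPJ] at this
  have hx'b : x' ∈ closedBall p ε :=
    closure_minimal (hPC.trans (hC.trans ball_subset_closedBall)) isClosed_closedBall
      hP.right_mem_closure
  refine ⟨x', hx', f, hf, Q, hQP.trans hPH, hQ, ?_, hQF.subset, fun z hz => ?_⟩
  · rw [← hPJ]
    exact inter_subset_inter_left _ hQP
  · by_cases h : z = x'
    · rwa [h]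
    · exact ball_subset_closedBall (hC (hPC ⟨hQP hz, h⟩))

lemma IsArc.exists_leg {H F : Set X} {w : X} {ε : ℝ} (hH : IsArc H o w) (hF : IsClosed F)
    (hw : w ∈ F) (hε : 0 < ε) (hFb : F ⊆ ball p (ε / 2)) (ho : ε < dist o p) :
    ∃ x f, ∃ R ⊆ H, ∃ A ⊆ H, IsArc R o x ∧ IsArc A x f ∧ f ∈ F ∧ A ∩ F ⊆ {f} ∧ R ∩ A ⊆ {x} ∧
      ∀ z ∈ R, z ∉ closedBall p (ε / 2) := by
  obtain ⟨f, hf, Q, hQH, hQ, hQF, -⟩ := hH.exists_first_hit hF ⟨w, hH.right_mem, hw⟩ (fun h => by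
    have := mem_ball.1 (hFb h)
    linarith)
  have hfb := mem_ball.1 (hFb hf)
  obtain ⟨x, R, hRQ, hR, hx, hRb, hrest⟩ := hQ.exists_first_exit (g := fun z => -dist z p)
    (continuous_id.dist continuous_const).neg (r := -(3 * ε / 4)) (by linarith)
    ⟨f, hQ.right_mem, by linarith⟩
  have hxf : x ≠ f := by
    rintro rfl
    linarith
  obtain ⟨A, hA, hRA, hRi⟩ := hrest hxf
  have hAQ : A ⊆ Q := subset_union_right.trans hRA.subset
  refine ⟨x, f, R, hRQ.trans hQH, A, hAQ.trans hQH, hR, hA, hf, fun z hz => hQF.subset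
    ⟨hAQ hz.1, hz.2⟩, hRi.subset, fun z hz h => ?_⟩
  have h1 := hRb z hz
  have h2 := mem_closedBall.1 h
  linarith

lemma exists_arc_of_rays [CompactSpace X] {Q D : ℕ → Set X} {z : ℕ → X} {ε : ℕ → ℝ}
    (h0 : JoinedIn (Q 1) o (z 1)) (hj : ∀ n, JoinedIn (Q (n + 1) ∩ D n) (z n) (z (n + 1)))
    (hD : ∀ n, D (n + 1) ⊆ closedBall p (ε n)) (hε : Tendsto ε atTop (𝓝 0)) (hop : o ≠ p) :
    ∃ A ⊆ (⋃ n, Q n) ∪ {p}, IsArc A o p := by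
  have h1 : JoinedIn ((⋃ n, Q (n + 2) ∩ D (n + 1)) ∪ {p}) (z 1) p :=
    joinedIn_of_tendsto (x := fun n => z (n + 1)) (S := fun n => Q (n + 2) ∩ D (n + 1)) hε
      (fun n => inter_subset_right.trans (hD n)) (fun n => hj (n + 1))
  have h2 : JoinedIn ((⋃ n, Q n) ∪ {p}) o p := by
    refine (h0.mono ?_).trans (h1.mono ?_)
    · exact (subset_iUnion Q 1).trans subset_union_left
    · refine union_subset_union_left _ (iUnion_subset fun n => ?_)
      exact inter_subset_left.trans (subset_iUnion Q (n + 2))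
  exact h2.exists_isArc hop

variable [CompactSpace X] [LocallyPathConnectedSpace X]

lemma EarState.exists_step (hα : EndArc T p α) (hT : MaximalCyclic T) (hpT : p ∉ T)
    (σ : EarState T p o α) : ∃ τ, EarStep σ τ := by
  have hJ : IsJordanCurve ((σ.R ∪ σ.D) ∪ σ.L) := by
    refine isJordanCurve_union (σ.arcR.join σ.arcD fun z hz => σ.inter_DR ⟨hz.2, hz.1⟩) σ.arcL ?_
    rintro z ⟨h1 | h1, h2⟩
    · exact Or.inl (σ.inter_RL ⟨h1, h2⟩)
    · exact Or.inr (σ.inter_DL ⟨h1, h2⟩)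
  rw [show (σ.R ∪ σ.D) ∪ σ.L = σ.R ∪ σ.L ∪ σ.D by ext; simp; tauto] at hJ
  set J := σ.R ∪ σ.L ∪ σ.D with hJdef
  have hJT : J ⊆ T := union_subset (union_subset σ.R_subset σ.L_subset) σ.D_subset
  obtain ⟨δ, hδ, hδJ⟩ := Metric.isOpen_iff.1 hJ.isClosed.isOpen_compl p fun h => hpT (hJT h)
  have hσ := σ.pos
  obtain ⟨ε', hpos, hε'1, hε'2⟩ : ∃ ε' > 0, ε' < δ ∧ ε' ≤ σ.ε / 2 :=
    ⟨min (δ / 2) (σ.ε / 2), by positivity, (min_le_left _ _).trans_lt (by linarith),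
      min_le_right _ _⟩
  have hJb : ∀ z ∈ J, z ∉ closedBall p ε' := fun z hz h =>
    hδJ (closedBall_subset_ball hε'1 h) hz
  obtain ⟨C', hC', hC'c, s', hs', htail'⟩ := hα.exists_cyclic_tail hT hpT hpos
  obtain ⟨s, hs, htail⟩ := σ.tail
  obtain ⟨u, hsu, hu1⟩ := exists_between (max_lt hs.2 hs'.2)
  obtain ⟨v, huv, hv1⟩ := exists_between hu1
  have hsu1 := (le_max_left _ _).trans_lt hsu
  have hsu2 := (le_max_right _ _).trans_lt hsu
  have hF : IsArc (α '' Icc u v) (α u) (α v) :=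
    IsArc.image hα.cont hα.inj (hs.1.trans hsu1.le) huv hv1.le
  set F := α '' Icc u v with hFdef
  have hIoo : ∀ {r : ℝ}, r < u → Icc u v ⊆ Ioo r 1 := fun h => Icc_subset_Ioo h hv1
  have hFC : F ⊆ σ.C := (image_mono (hIoo hsu1)).trans htail
  have hFC' : F ⊆ C' := (image_mono (hIoo hsu2)).trans htail'
  have hFJ : ∀ z ∈ F, z ∉ J := fun z hz hzJ => hJb z hzJ (ball_subset_closedBall (hC' (hFC' hz)).2)
  obtain ⟨d₁, hd₁, d₂, hd₂, hd⟩ := σ.two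
  have hcyc : CyclicallyConnected (J ∪ σ.C) := hJ.cyclicallyConnected.union σ.C_cyclic
    (Or.inr hd₁.1) (Or.inr hd₂.1) hd₁.2 hd₂.2 hd
  have hoJ : o ∈ J := Or.inl (Or.inl σ.arcR.left_mem)
  obtain ⟨H, hHs, hH, hoH⟩ := hcyc.exists_arc_through (Or.inr (hFC hF.left_mem))
    (Or.inr (hFC hF.right_mem)) hF.ne (Or.inl hoJ)
  obtain ⟨H₁, H₂, hH₁, hH₂, hH12, hHi⟩ := hH.split hoH (fun h => hFJ _ hF.left_mem (h ▸ hoJ))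
    (fun h => hFJ _ hF.right_mem (h ▸ hoJ))
  have hH₁s : H₁ ⊆ J ∪ σ.C := (subset_union_left.trans hH12.subset).trans hHs
  have hH₂s : H₂ ⊆ J ∪ σ.C := (subset_union_right.trans hH12.subset).trans hHs
  have hHo : ∀ z ∈ H₁, z ∈ H₂ → z = o := fun z h1 h2 => hHi.subset ⟨h1, h2⟩
  have hCb : σ.C ⊆ ball p σ.ε := fun z hz => (σ.C_subset hz).2
  obtain ⟨x', hx', f, hf, Q₁, hQ₁H, hQ₁, hQ₁J, hQ₁F, hQ₁b⟩ :=
    hH₁.exists_connector hH₁s hJ.isClosed hoJ hCb hF.isClosed hF.left_mem hFJ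
  obtain ⟨y', hy', f', hf', Q₂, hQ₂H, hQ₂, hQ₂J, hQ₂F, hQ₂b⟩ :=
    hH₂.symm.exists_connector hH₂s hJ.isClosed hoJ hCb hF.isClosed hF.right_mem hFJ
  have hob : o ∉ closedBall p σ.ε := σ.R_disj o σ.arcR.left_mem
  have hmem : ∀ z ∈ J, z ∈ closedBall p σ.ε → z ∈ σ.D ∧ z ≠ σ.x ∧ z ≠ σ.y := by
    intro z hz hzb
    refine ⟨?_, fun h => σ.R_disj _ σ.arcR.right_mem (h ▸ hzb),
      fun h => σ.L_disj _ σ.arcL.right_mem (h ▸ hzb)⟩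
    rcases hz with (h | h) | h
    · exact absurd hzb (σ.R_disj z h)
    · exact absurd hzb (σ.L_disj z h)
    · exact h
  obtain ⟨hx1, hx2, hx3⟩ := hmem x' hx' (hQ₁b hQ₁.left_mem)
  obtain ⟨hy1, hy2, hy3⟩ := hmem y' hy' (hQ₂b hQ₂.left_mem)
  have hff : f ≠ f' := fun h => hFJ f hf (by
    rw [hHo f (hQ₁H hQ₁.right_mem) (h ▸ hQ₂H hQ₂.right_mem)]
    exact hoJ)
  obtain ⟨F', hF'F, hF'⟩ := hF.exists_subarc hf hf' hff
  have hD1 : IsArc (Q₁ ∪ F') x' f' := hQ₁.join hF' fun z hz => hQ₁F ⟨hz.1, hF'F hz.2⟩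
  have hD' : IsArc ((Q₁ ∪ F') ∪ Q₂) x' y' := by
    refine hD1.join hQ₂.symm ?_
    rintro z ⟨h1 | h1, h2⟩
    · obtain rfl := hHo z (hQ₁H h1) (hQ₂H h2)
      exact absurd (hQ₁b h1) hob
    · exact hQ₂F ⟨h2, hF'F h1⟩
  have hJCT : J ∪ σ.C ⊆ T := union_subset hJT fun z hz => (σ.C_subset hz).1
  refine σ.exists_step_of_ear hx1 hx2 hx3 hy1 hy2 hy3 hD' ?_ ?_ ?_ hpos hε'2 hJb hC' hC'c
    ⟨s', hs', htail'⟩ ⟨f, ⟨Or.inl (Or.inl hQ₁.right_mem), hFC' hf⟩, f',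
      ⟨Or.inr hQ₂.right_mem, hFC' hf'⟩, hff⟩
  · rintro z ((h | h) | h) hz
    · exact Or.inl (hQ₁J ⟨h, hz⟩)
    · exact absurd hz (hFJ z (hF'F h))
    · exact Or.inr (hQ₂J ⟨h, hz⟩)
  · exact union_subset (union_subset ((hQ₁H.trans hH₁s).trans hJCT)
      ((hF'F.trans hFC).trans fun z hz => (σ.C_subset hz).1)) ((hQ₂H.trans hH₂s).trans hJCT)
  · exact union_subset (union_subset hQ₁b ((hF'F.trans hFC).trans
      (hCb.trans ball_subset_closedBall))) hQ₂b

lemma EndArc.exists_earState (hα : EndArc T p α) (hT : MaximalCyclic T) (hpT : p ∉ T) :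
    ∃ o ∈ T, Nonempty (EarState T p o α) := by
  have hoT : α 0 ∈ T := hα.mem 0 ⟨le_rfl, one_pos⟩
  refine ⟨α 0, hoT, ?_⟩
  set o := α 0
  have hop : 0 < dist o p := dist_pos.2 fun h => hpT (h ▸ hoT)
  obtain ⟨ε, hε, hεo⟩ := exists_between hop
  obtain ⟨C, hC, hCc, s, hs, htail⟩ := hα.exists_cyclic_tail hT hpT (half_pos hε)
  obtain ⟨u, hsu, hu1⟩ := exists_between hs.2
  obtain ⟨v, huv, hv1⟩ := exists_between hu1
  have hF : IsArc (α '' Icc u v) (α u) (α v) :=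
    IsArc.image hα.cont hα.inj (hs.1.trans hsu.le) huv hv1.le
  set F := α '' Icc u v with hFdef
  have hIoo : ∀ {r : ℝ}, r < u → Icc u v ⊆ Ioo r 1 := fun h => Icc_subset_Ioo h hv1
  have hFC : F ⊆ C := (image_mono (hIoo hsu)).trans htail
  have hFT : F ⊆ T := fun z hz => (hC (hFC hz)).1
  have hFb : F ⊆ ball p (ε / 2) := fun z hz => (hC (hFC hz)).2
  have hoF : o ∉ F := fun h => by
    have := mem_ball.1 (hFb h)
    linarith
  obtain ⟨H, hHT, hH, hoH⟩ := hT.2.1.exists_arc_through (hFT hF.left_mem)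
    (hFT hF.right_mem) hF.ne hoT
  obtain ⟨H₁, H₂, hH₁, hH₂, hH12, hHi⟩ := hH.split hoH (fun h => hoF (h ▸ hF.left_mem))
    (fun h => hoF (h ▸ hF.right_mem))
  have hH₁T : H₁ ⊆ T := (subset_union_left.trans hH12.subset).trans hHT
  have hH₂T : H₂ ⊆ T := (subset_union_right.trans hH12.subset).trans hHT
  have hHo : ∀ z ∈ H₁, z ∈ H₂ → z = o := fun z h1 h2 => hHi.subset ⟨h1, h2⟩
  obtain ⟨x, f, R, hRH, A, hAH, hR, hA, hf, hAF, hRA, hRb⟩ :=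
    hH₁.symm.exists_leg hF.isClosed hF.left_mem hε hFb hεo
  obtain ⟨y, f', L, hLH, B, hBH, hL, hB, hf', hBF, hLB, hLb⟩ :=
    hH₂.exists_leg hF.isClosed hF.right_mem hε hFb hεo
  have hff : f ≠ f' := fun h => hoF (by
    rw [← hHo f (hAH hA.right_mem) (h ▸ hBH hB.right_mem)]
    exact hf)
  obtain ⟨F', hF'F, hF'⟩ := hF.exists_subarc hf hf' hff
  have hoA : o ∉ A := fun h => hR.ne (hRA ⟨hR.left_mem, h⟩)
  have hoB : o ∉ B := fun h => hL.ne (hLB ⟨hL.left_mem, h⟩)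
  have hFcb : ∀ z ∈ F', z ∈ closedBall p (ε / 2) := fun z hz =>
    ball_subset_closedBall (hFb (hF'F hz))
  have hD : IsArc ((A ∪ F') ∪ B) x y := by
    refine (hA.join hF' fun z hz => hAF ⟨hz.1, hF'F hz.2⟩).join hB.symm ?_
    rintro z ⟨h1 | h1, h2⟩
    · exact absurd (hHo z (hAH h1) (hBH h2) ▸ h1) hoA
    · exact hBF ⟨h2, hF'F h1⟩
  refine ⟨⟨R, L, (A ∪ F') ∪ B, C, x, y, ε / 2, hR, hL, hD, ?_, ?_, ?_, hRH.trans hH₁T,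
    hLH.trans hH₂T, union_subset (union_subset (hAH.trans hH₁T) (hF'F.trans hFT)) (hBH.trans hH₂T),
    half_pos hε, hRb, hLb, hC, hCc, ⟨s, hs, htail⟩,
    ⟨f, ⟨Or.inl (Or.inl hA.right_mem), hFC hf⟩, f', ⟨Or.inr hB.right_mem, hFC hf'⟩, hff⟩⟩⟩
  · exact fun z hz => hHo z (hRH hz.1) (hLH hz.2)
  · rintro z ⟨(h | h) | h, h2⟩
    · exact hRA ⟨h2, h⟩
    · exact absurd (hFcb z h) (hRb z h2)
    · exact absurd (hHo z (hRH h2) (hBH h) ▸ h) hoB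
  · rintro z ⟨(h | h) | h, h2⟩
    · exact absurd (hHo z (hAH h) (hLH h2) ▸ h) hoA
    · exact absurd (hFcb z h) (hLb z h2)
    · exact hLB ⟨h2, h⟩

theorem MaximalCyclic.isClosed (hT : MaximalCyclic T) : IsClosed T := by
  refine isClosed_of_closure_subset fun p hp => ?_
  by_contra hpT
  obtain ⟨α, hα⟩ := hT.exists_endArc hp hpT
  obtain ⟨o, hoT, ⟨σ₀⟩⟩ := hα.exists_earState hT hpT
  choose next hnext using fun σ : EarState T p o α => σ.exists_step hα hT hpT
  obtain ⟨σ, hσ⟩ : ∃ σ : ℕ → EarState T p o α, ∀ n, EarStep (σ n) (σ (n + 1)) :=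
    ⟨fun n => next^[n] σ₀, fun n => by
      simpa only [Function.iterate_succ_apply'] using hnext _⟩
  have hRm : Monotone fun n => (σ n).R := monotone_nat_of_le_succ fun n => (hσ n).R_mono
  have hLm : Monotone fun n => (σ n).L := monotone_nat_of_le_succ fun n => (hσ n).L_mono
  have hε : Tendsto (fun n => (σ n).ε) atTop (𝓝 0) := by
    have hle : ∀ n, (σ n).ε ≤ (σ 0).ε * (1 / 2) ^ n := by
      intro n
      induction n with
      | zero => simp
      | succ n ih =>
        rw [pow_succ]
        linarith [(hσ n).eps]
    refine squeeze_zero (fun n => (σ n).pos.le) hle ?_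
    simpa using (tendsto_pow_atTop_nhds_zero_of_lt_one (r := (1 / 2 : ℝ)) (by norm_num)
      (by norm_num)).const_mul (σ 0).ε
  have hop : o ≠ p := fun h => hpT (h ▸ hoT)
  obtain ⟨A, hAs, hA⟩ := exists_arc_of_rays (Q := fun n => (σ n).R) (z := fun n => (σ n).x)
    (σ 1).arcR.joinedIn
    (fun n => (hσ n).joinR) (fun n => (hσ n).D_ball) hε hop
  obtain ⟨B, hBs, hB⟩ := exists_arc_of_rays (Q := fun n => (σ n).L) (z := fun n => (σ n).y)
    (σ 1).arcL.joinedIn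
    (fun n => (hσ n).joinL) (fun n => (hσ n).D_ball) hε hop
  have hJ : IsJordanCurve (A ∪ B) := by
    refine isJordanCurve_union hA hB ?_
    rintro z ⟨hz1, hz2⟩
    rcases hAs hz1 with h1 | h1
    · rcases hBs hz2 with h2 | h2
      · obtain ⟨m, hm⟩ := mem_iUnion.1 h1
        obtain ⟨n, hn⟩ := mem_iUnion.1 h2
        exact Or.inl ((σ (max m n)).inter_RL ⟨hRm (le_max_left m n) hm, hLm (le_max_right m n) hn⟩)
      · exact Or.inr h2
    · exact Or.inr h1
  obtain ⟨c, hcA, hco, hcp⟩ := hA.exists_interior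
  have hcT : c ∈ T := by
    rcases hAs hcA with h | h
    · obtain ⟨m, hm⟩ := mem_iUnion.1 h
      exact (σ m).R_subset hm
    · exact absurd h hcp
  exact hpT (hT.subset_of_mem hJ.cyclicallyConnected hoT hcT (Or.inl hA.left_mem) (Or.inl hcA)
    hco.symm (Or.inl hA.right_mem))

end Ears

section Arms

variable {X : Type} [MetricSpace X] {A A' : Set X} {r r' v v' : X}
  {B K V M : Set X} {a p q : X}

/-- A closed set `K` and an open path-connected set `V` meeting it, such that `K` contains every arc
between two of its points as well as every Jordan curve in `V`. -/
structure ArmSetting (K V : Set X) : Prop where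
  closed : IsClosed K
  isOpen : IsOpen V
  pathConnected : IsPathConnected V
  meets : (V ∩ K).Nonempty
  convex : ∀ {A a b}, IsArc A a b → a ∈ K → b ∈ K → A ⊆ K
  jordan : ∀ {J}, IsJordanCurve J → J ⊆ V → J ⊆ K

/-- `A` is a possibly degenerate arc in `V` from `v` to `r` meeting `K` only in `r`. -/
structure IsArm (K V A : Set X) (v r : X) : Prop where
  subset : A ⊆ V
  inter : A ∩ K = {r}
  arc : IsArc A v r ∨ A = {v} ∧ v = r

namespace IsArm

lemma left_mem (h : IsArm K V A v r) : v ∈ A := by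
  rcases h.arc with h | ⟨rfl, -⟩
  · exact h.left_mem
  · rfl

lemma right_mem (h : IsArm K V A v r) : r ∈ A := by
  have : r ∈ A ∩ K := h.inter ▸ rfl
  exact this.1

lemma right_mem_K (h : IsArm K V A v r) : r ∈ K := by
  have : r ∈ A ∩ K := h.inter ▸ rfl
  exact this.2

lemma eq_right (h : IsArm K V A v r) (hp : p ∈ A) (hpK : p ∈ K) : p = r := h.inter.subset ⟨hp, hpK⟩

lemma isCompact (h : IsArm K V A v r) : IsCompact A := by
  rcases h.arc with h | ⟨rfl, -⟩
  · exact h.isCompact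
  · exact isCompact_singleton

lemma isPreconnected (h : IsArm K V A v r) : IsPreconnected A := by
  rcases h.arc with h | ⟨rfl, -⟩
  · exact h.isPreconnected
  · exact isPreconnected_singleton

lemma joinedIn (h : IsArm K V A v r) : JoinedIn A v r := by
  rcases h.arc with h | ⟨rfl, rfl⟩
  · exact h.joinedIn
  · exact JoinedIn.refl rfl

lemma exists_subarc (h : IsArm K V A v r) (hp : p ∈ A) (hq : q ∈ A) (hpq : p ≠ q) :
    ∃ B ⊆ A, IsArc B p q := by
  rcases h.arc with h | ⟨rfl, -⟩
  · exact h.exists_subarc hp hq hpq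
  · exact absurd (hp.trans hq.symm) hpq

lemma of_subarc (h : IsArm K V A v r) (hB : IsArc B p r) (hBA : B ⊆ A) : IsArm K V B p r :=
  ⟨hBA.trans h.subset, Subset.antisymm (fun _ hz => h.eq_right (hBA hz.1) hz.2)
    (singleton_subset_iff.2 ⟨hB.right_mem, h.right_mem_K⟩), Or.inl hB⟩

lemma singleton (hv : v ∈ V) (hK : v ∈ K) : IsArm K V {v} v v :=
  ⟨singleton_subset_iff.2 hv, inter_eq_left.2 (singleton_subset_iff.2 hK), Or.inr ⟨rfl, rfl⟩⟩

lemma eq_singleton (h : IsArm K V A v r) (hv : v ∈ K) : A = {v} ∧ r = v := by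
  have hvr := h.eq_right h.left_mem hv
  rcases h.arc with h | ⟨h, -⟩
  · exact absurd hvr h.ne
  · exact ⟨h, hvr.symm⟩

end IsArm

namespace ArmSetting

lemma arc_subset_arm (hS : ArmSetting K V) (hA : IsArc A a r) (hr : r ∈ K) (hAK : A ∩ K ⊆ {r})
    (hAV : A ⊆ V) (hA' : IsArm K V A' v' r') (ha : a ∈ A') : A ⊆ A' := by
  have hne : ∀ c ∈ A, c ≠ r → c ∈ A' := by
    intro c hcA hcr
    by_contra hcA'
    have hcK : c ∉ K := fun h => hcr (hAK ⟨hcA, h⟩)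
    obtain ⟨G, hGA, d, hd, e, he, hG, hcG, hGi⟩ := hA.exists_gap (K := A' ∪ K)
      (hA'.isCompact.isClosed.union hS.closed) (Or.inl ha) (Or.inr hr) hcA
      (fun h => h.elim hcA' hcK)
    have hKK : d ∈ K → e ∉ K := fun h h' => hcK (hS.convex hG h h' hcG)
    have hAA : d ∈ A' → e ∉ A' := by
      intro h h'
      obtain ⟨B, hBA, hB⟩ := hA'.exists_subarc h h' hG.ne
      exact hcK (hS.jordan (isJordanCurve_union hG hB fun z hz => hGi ⟨hz.1, Or.inl (hBA hz.2)⟩)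
        (union_subset (hGA.trans hAV) (hBA.trans hA'.subset)) (Or.inl hcG))
    have hmix : ∀ {d e}, IsArc G d e → G ∩ (A' ∪ K) ⊆ {d, e} → d ∈ A' → d ∉ K → e ∉ A' → e ∉ K := by
      intro d e hG hGi hdA hdK heA heK
      obtain ⟨B, hBA, hB⟩ := hA'.exists_subarc hA'.right_mem hdA
        (fun h => hdK (h ▸ hA'.right_mem_K))
      refine hcK (hS.convex (hB.join hG ?_) hA'.right_mem_K heK (Or.inr hcG))
      intro z hz
      rcases hGi ⟨hz.2, Or.inl (hBA hz.1)⟩ with h | h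
      · exact h
      · exact absurd (h ▸ hBA hz.1) heA
    rcases hd with hd | hd
    · have he' := hAA hd
      have heK := he.resolve_left he'
      exact hmix hG hGi hd (fun h => hKK h heK) he' heK
    · have heA := he.resolve_right (hKK hd)
      exact hmix hG.symm (by rwa [pair_comm]) heA (hKK hd) (fun h => hAA h heA) hd
  intro c hc
  by_cases hcr : c = r
  · rw [hcr]
    exact closure_minimal (fun z hz => hne z hz.1 hz.2) hA'.isCompact.isClosed hA.right_mem_closure
  · exact hne c hc hcr

lemma arm_subset (hS : ArmSetting K V) (hA : IsArm K V A v r) (hA' : IsArm K V A' v' r')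
    (hv : v ∈ A') : A ⊆ A' := by
  rcases hA.arc with h | ⟨rfl, -⟩
  · exact hS.arc_subset_arm h hA.right_mem_K hA.inter.subset hA.subset hA' hv
  · exact singleton_subset_iff.2 hv

lemma arm_unique (hS : ArmSetting K V) (hA : IsArm K V A v r) (hA' : IsArm K V A' v r') : A = A' :=
  (hS.arm_subset hA hA' hA'.left_mem).antisymm (hS.arm_subset hA' hA hA.left_mem)

lemma right_unique (hS : ArmSetting K V) (hA : IsArm K V A v r) (hA' : IsArm K V A' v' r')
    (hv : v ∈ A') : r = r' :=
  hA'.eq_right (hS.arm_subset hA hA' hv hA.right_mem) hA.right_mem_K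

lemma notMem_arm (hS : ArmSetting K V) (hA : IsArm K V A v r) (hA' : IsArm K V A' p r')
    (hp : p ∈ A) (hpv : p ≠ v) : v ∉ A' := by
  obtain rfl := hS.right_unique hA' hA hp
  rcases hA.arc with h | ⟨rfl, -⟩
  · by_cases hpr : p = r'
    · rw [(hA'.eq_singleton (hpr ▸ hA'.right_mem_K)).1]
      exact fun h => hpv h.symm
    · obtain ⟨A₁, A₂, h₁, h₂, hu, hi⟩ := h.split hp hpv hpr
      rw [hS.arm_unique hA' (hA.of_subarc h₂ (subset_union_right.trans hu.subset))]
      exact fun h => hpv (hi.subset ⟨h₁.left_mem, h⟩).symm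
  · exact absurd hp hpv

lemma mem_arm_or (hS : ArmSetting K V) (hA : IsArm K V A v r) {P Q : Set X} {r₁ r₂ : X}
    (hP : IsArm K V P p r₁) (hQ : IsArm K V Q q r₂) (hp : p ∈ A) (hq : q ∈ A) : q ∈ P ∨ p ∈ Q := by
  obtain rfl := hS.right_unique hP hA hp
  obtain rfl := hS.right_unique hQ hA hq
  by_cases hpv : p = v
  · subst hpv
    exact Or.inl (hS.arm_unique hA hP ▸ hq)
  by_cases hqv : q = v
  · subst hqv
    exact Or.inr (hS.arm_unique hA hQ ▸ hp)
  by_cases hpr : p = r₂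
  · exact Or.inr (hpr ▸ hQ.right_mem)
  rcases hA.arc with h | ⟨rfl, -⟩
  · obtain ⟨A₁, A₂, h₁, h₂, hu, hi⟩ := h.split hp hpv hpr
    have hA₁ : A₁ ⊆ A := subset_union_left.trans hu.subset
    have hA₂ : A₂ ⊆ A := subset_union_right.trans hu.subset
    rw [hS.arm_unique hP (hA.of_subarc h₂ hA₂)]
    by_cases hq2 : q ∈ A₂
    · exact Or.inl hq2
    · have hq1 : q ∈ A₁ := (hu.superset hq).resolve_right hq2
      obtain ⟨B₁, B₂, -, hB₂, hBu, -⟩ := h₁.split hq1 hqv (fun h => hq2 (h ▸ h₂.left_mem))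
      have hB : B₂ ⊆ A₁ := subset_union_right.trans hBu.subset
      have := hB₂.join h₂ ((inter_subset_inter_left _ hB).trans hi.subset)
      rw [hS.arm_unique hQ (hA.of_subarc this (union_subset (hB.trans hA₁) hA₂))]
      exact Or.inr (Or.inl hB₂.right_mem)
  · exact absurd hp hpv

lemma exists_small_nhds [LocallyPathConnectedSpace X] (hS : ArmSetting K V) (hv : v ∈ V)
    {ε : ℝ} (hε : 0 < ε) :
    ∃ M ∈ 𝓝 v, IsPathConnected M ∧ M ⊆ V ∧ M ⊆ ball v ε := by
  obtain ⟨M, ⟨hM, hvM⟩, hMs⟩ := (isOpen_isPathConnected_basis v).mem_iff.1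
    (inter_mem (hS.isOpen.mem_nhds hv) (ball_mem_nhds v hε))
  exact ⟨M, hM.mem_nhds hvM.1, hvM.2, fun z hz => (hMs hz).1, fun z hz => (hMs hz).2⟩

variable [CompactSpace X]

lemma exists_arm (hS : ArmSetting K V) (hv : v ∈ V) : ∃ A r, IsArm K V A v r := by
  by_cases hvK : v ∈ K
  · exact ⟨{v}, v, IsArm.singleton hv hvK⟩
  · obtain ⟨x, hxV, hxK⟩ := hS.meets
    obtain ⟨A, hAV, hA⟩ := (hS.pathConnected.joinedIn v hv x hxV).exists_isArc
      (fun h => hvK (h ▸ hxK))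
    obtain ⟨c, -, A₁, hA₁, hc, hi, -⟩ := hA.exists_first_hit hS.closed ⟨x, hA.right_mem, hxK⟩ hvK
    exact ⟨A₁, c, hA₁.trans hAV, hi, Or.inl hc⟩

lemma arm_subset_union (hS : ArmSetting K V) (hM : IsPathConnected M) (hMV : M ⊆ V) (hv : v ∈ M)
    (hv' : v' ∈ M) (hA : IsArm K V A v r) (hA' : IsArm K V A' v' r') : A' ⊆ A ∪ M := by
  by_cases hvK : v' ∈ K
  · rw [(hA'.eq_singleton hvK).1]
    exact singleton_subset_iff.2 (Or.inr hv')
  · have hj : JoinedIn (A ∪ M) v' r := ((hM.joinedIn v' hv' v hv).mono subset_union_right).trans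
      (hA.joinedIn.mono subset_union_left)
    obtain ⟨B, hBs, hB⟩ := hj.exists_isArc (fun h => hvK (h ▸ hA.right_mem_K))
    obtain ⟨c, -, B₁, hB₁, hc, hi, -⟩ :=
      hB.exists_first_hit hS.closed ⟨r, hB.right_mem, hA.right_mem_K⟩ hvK
    have : IsArm K V B₁ v' c :=
      ⟨(hB₁.trans hBs).trans (union_subset hA.subset hMV), hi, Or.inl hc⟩
    rw [hS.arm_unique hA' this]
    exact hB₁.trans hBs

variable [LocallyPathConnectedSpace X]

/-- A continuous height on `V`, vanishing exactly at the ends of arms and injective along arms. -/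
lemma exists_height (hS : ArmSetting K V) : ∃ h : X → ℝ, ContinuousOn h V ∧
    (∀ v ∈ V ∩ K, h v = 0) ∧ ∀ {A v r}, IsArm K V A v r → InjOn h A ∧ 0 ≤ h v := by
  obtain ⟨x, hxV, hxK⟩ := hS.meets
  have : Nonempty X := ⟨x⟩
  obtain ⟨μ, hμ, hμs⟩ := exists_whitney_functional X
  have hex : ∀ v, ∃ A r, v ∈ V → IsArm K V A v r := by
    intro v
    by_cases hv : v ∈ V
    · obtain ⟨A, r, h⟩ := hS.exists_arm hv
      exact ⟨A, r, fun _ => h⟩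
    · exact ⟨∅, v, fun h => absurd h hv⟩
  choose arm r harm using hex
  have hnear : ∀ v ∈ V, ∀ ε > 0, ∀ᶠ v' in 𝓝 v, v' ∈ V ∧
      |μ (arm v') - μ (arm v)| ≤ ε ∧ dist (r v') (r v) ≤ ε := by
    intro v hv ε hε
    obtain ⟨M, hM, hMp, hMV, hMb⟩ := hS.exists_small_nhds hv (half_pos hε)
    have hvM := mem_of_mem_nhds hM
    have hd : ∀ a ∈ M, ∀ b ∈ M, dist a b ≤ ε := fun a ha b hb => by
      have h1 := mem_ball.1 (hMb ha)
      have h2 := mem_ball.1 (hMb hb)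
      linarith [dist_triangle_right a b v]
    have hle : ∀ a ∈ M, ∀ b ∈ M, μ (arm b) ≤ μ (arm a) + ε := by
      intro a ha b hb
      have hA := harm a (hMV ha)
      have hB := harm b (hMV hb)
      refine hμ _ _ _ ⟨_, hA.left_mem⟩ ⟨_, hB.left_mem⟩ fun z hz => ?_
      rcases hS.arm_subset_union hMp hMV hb ha hB hA hz with h | h
      · exact ⟨z, h, by simpa using hε.le⟩
      · exact ⟨b, hB.left_mem, hd z h b hb⟩
    filter_upwards [hM] with v' hv'
    refine ⟨hMV hv', abs_le.2 ⟨by linarith [hle v' hv' v hvM], by linarith [hle v hvM v' hv']⟩, ?_⟩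
    have hA := harm v hv
    have hA' := harm v' (hMV hv')
    rcases hS.arm_subset_union hMp hMV hvM hv' hA hA' hA'.right_mem with h | h
    · rw [hA.eq_right h hA'.right_mem_K, dist_self]
      exact hε.le
    · rcases hS.arm_subset_union hMp hMV hv' hvM hA' hA hA.right_mem with h' | h'
      · rw [hA'.eq_right h' hA.right_mem_K, dist_self]
        exact hε.le
      · exact hd _ h _ h'
  have hmono : ∀ {p v}, v ∈ V → p ∈ arm v → μ (arm v) ≤ μ (arm p) := by
    intro p v hv hp
    have hP := harm p ((harm v hv).subset hp)
    have := hμ (arm p) (arm v) 0 ⟨_, hP.left_mem⟩ ⟨_, hp⟩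
      (fun a ha => ⟨a, hS.arm_subset hP (harm v hv) hp ha, by simp⟩)
    linarith
  have hstrict : ∀ {p v}, v ∈ V → p ∈ arm v → μ (arm v) = μ (arm p) → p = v := by
    intro p v hv hp heq
    by_contra hpv
    have hA := harm v hv
    have hP := harm p (hA.subset hp)
    exact hS.notMem_arm hA hP hp hpv (hμs _ _ ⟨_, hP.left_mem⟩ hP.isCompact.isClosed
      (hS.arm_subset hP hA hp) heq.symm hA.left_mem)
  refine ⟨fun v => μ {r v} - μ (arm v), ?_, ?_, ?_⟩
  · intro v hv
    refine ContinuousAt.continuousWithinAt (Metric.continuousAt_iff'.2 fun ε hε => ?_)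
    filter_upwards [hnear v hv (ε / 3) (by positivity)] with v' ⟨hv', h1, h2⟩
    have h3 : ∀ a b, dist a b ≤ ε / 3 → μ {b} ≤ μ {a} + ε / 3 := fun a b hab =>
      hμ _ _ _ (singleton_nonempty _) (singleton_nonempty _) (by
        rintro z rfl
        exact ⟨b, rfl, hab⟩)
    have h4 := h3 _ _ h2
    have h5 := h3 _ _ (dist_comm (r v') (r v) ▸ h2)
    obtain ⟨h6, h7⟩ := abs_le.1 h1
    rw [Real.dist_eq, abs_lt]
    constructor <;> linarith
  · rintro v ⟨hv, hvK⟩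
    obtain ⟨h1, h2⟩ := (harm v hv).eq_singleton hvK
    simp [h1, h2]
  · intro A v r' hA
    have hv : v ∈ V := hA.subset hA.left_mem
    rw [hS.arm_unique hA (harm v hv)]
    have hA := harm v hv
    constructor
    · intro p hp q hq hpq
      have hP := harm p (hA.subset hp)
      have hQ := harm q (hA.subset hq)
      have hpq' : μ (arm p) = μ (arm q) := by
        simp only [hS.right_unique hP hA hp, hS.right_unique hQ hA hq] at hpq
        linarith
      rcases hS.mem_arm_or hA hP hQ hp hq with h | h
      · exact (hstrict (hA.subset hp) h hpq').symm
      · exact hstrict (hA.subset hq) h hpq'.symm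
    · have hR := harm (r v) (hA.subset hA.right_mem)
      have := hmono hv hA.right_mem
      rw [(hR.eq_singleton hA.right_mem_K).1] at this
      linarith

theorem exists_deformation (hS : ArmSetting K V) : ∃ G : X × unitInterval → X,
    ContinuousOn G (V ×ˢ univ) ∧ (∀ v ∈ V, ∀ t, G (v, t) ∈ V) ∧ (∀ v ∈ V, G (v, 0) = v) ∧
      (∀ v ∈ V, G (v, 1) ∈ K) ∧ ∀ v ∈ V ∩ K, ∀ t, G (v, t) = v := by
  obtain ⟨h, hcont, hzero, hinj⟩ := hS.exists_height
  have hex : ∀ q : X × unitInterval, ∃ p, q.1 ∈ V → ∃ A r, IsArm K V A q.1 r ∧ p ∈ A ∧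
      h p = (1 - (q.2 : ℝ)) * h q.1 := by
    rintro ⟨v, t⟩
    by_cases hv : v ∈ V
    · obtain ⟨A, r, hA⟩ := hS.exists_arm hv
      have h0 := (hinj hA).2
      have hr := hzero r ⟨hA.subset hA.right_mem, hA.right_mem_K⟩
      obtain ⟨p, hp, hpe⟩ := hA.isPreconnected.intermediate_value hA.right_mem hA.left_mem
        (hcont.mono hA.subset) (show (1 - (t : ℝ)) * h v ∈ Icc (h r) (h v) by
          rw [hr]
          constructor
          · exact mul_nonneg (by linarith [t.2.2]) h0
          · nlinarith [t.2.1])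
      exact ⟨p, fun _ => ⟨A, r, hA, hp, hpe⟩⟩
    · exact ⟨v, fun h => absurd h hv⟩
  choose G hG using hex
  refine ⟨G, ?_, ?_, ?_, ?_, ?_⟩
  · rintro ⟨v, t⟩ ⟨hv, -⟩
    refine ContinuousAt.continuousWithinAt (Metric.continuousAt_iff'.2 fun ε hε => ?_)
    obtain ⟨A, r, hA, hp, hpe⟩ := hG (v, t) hv
    set p := G (v, t)
    dsimp only at hA hpe
    obtain ⟨δ, hδ, hδA⟩ : ∃ δ > 0, ∀ q ∈ A, |h q - h p| < δ → dist q p < ε / 2 := by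
      by_contra! hcon
      have hcpt : IsCompact (A \ ball p (ε / 2)) := hA.isCompact.diff isOpen_ball
      have hne : (A \ ball p (ε / 2)).Nonempty := by
        obtain ⟨q, hq, -, hqd⟩ := hcon 1 one_pos
        exact ⟨q, hq, by simpa using hqd⟩
      obtain ⟨q₀, hq₀, hmin⟩ := hcpt.exists_isMinOn hne (f := fun q => |h q - h p|)
        (((hcont.mono (sdiff_subset.trans hA.subset)).sub continuousOn_const).abs)
      have hpos : 0 < |h q₀ - h p| := abs_pos.2 (sub_ne_zero.2 fun heq =>
        hq₀.2 (by rw [(hinj hA).1 hq₀.1 hp heq]; exact mem_ball_self (half_pos hε)))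
      obtain ⟨q, hq, hqlt, hqd⟩ := hcon _ hpos
      exact (isMinOn_iff.1 hmin q ⟨hq, by simpa using hqd⟩).not_gt hqlt
    have hcv : ContinuousAt h v := hcont.continuousAt (hS.isOpen.mem_nhds hv)
    obtain ⟨η, hη, hηh⟩ := Metric.continuousAt_iff.1 hcv (δ / 2) (half_pos hδ)
    obtain ⟨M, hM, hMp, hMV, hMb⟩ := hS.exists_small_nhds hv (lt_min hη (half_pos hε))
    have hprod : ContinuousAt (fun q : X × unitInterval => (1 - (q.2 : ℝ)) * h q.1) (v, t) := by
      refine ContinuousAt.mul (by fun_prop) ?_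
      exact ContinuousAt.comp (f := Prod.fst) (g := h) (x := ((v, t) : X × unitInterval)) hcv
        continuousAt_fst
    have hnear := Metric.continuousAt_iff'.1 hprod (δ / 2) (half_pos hδ)
    have hMn : ∀ᶠ q : X × unitInterval in 𝓝 (v, t), q.1 ∈ M :=
      continuousAt_fst.eventually hM
    filter_upwards [hnear, hMn] with q hq hqM
    obtain ⟨A', r', hA', hp', hpe'⟩ := hG q (hMV hqM)
    rw [← hpe', ← hpe, Real.dist_eq] at hq
    rcases hS.arm_subset_union hMp hMV (mem_of_mem_nhds hM) hqM hA hA' hp' with h' | h'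
    · have := hδA _ h' (by linarith)
      linarith
    · have hb := mem_ball.1 (hMb h')
      have h1 := hηh (hb.trans_le (min_le_left _ _))
      rw [Real.dist_eq] at h1
      have h2 := hδA v hA.left_mem (by
        rw [abs_lt] at *
        constructor <;> linarith)
      linarith [dist_triangle (G q) v p, min_le_right η (ε / 2)]
  · intro v hv t
    obtain ⟨A, r, hA, hp, -⟩ := hG (v, t) hv
    exact hA.subset hp
  · intro v hv
    obtain ⟨A, r, hA, hp, hpe⟩ := hG (v, 0) hv
    exact (hinj hA).1 hp hA.left_mem (by simpa using hpe)
  · intro v hv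
    obtain ⟨A, r, hA, hp, hpe⟩ := hG (v, 1) hv
    have hr := hzero r ⟨hA.subset hA.right_mem, hA.right_mem_K⟩
    rw [(hinj hA).1 hp hA.right_mem (by rw [hr]; simpa using hpe)]
    exact hA.right_mem_K
  · rintro v ⟨hv, hvK⟩ t
    obtain ⟨A, r, hA, hp, -⟩ := hG (v, t) hv
    rw [(hA.eq_singleton hvK).1] at hp
    exact hp

end ArmSetting

end Arms

section Contraction

variable {X : Type} [MetricSpace X] {x : X}

/-- `c` is a strong deformation retraction of `W` onto `{x}`. -/
structure IsContraction (W : Set X) (x : X) (c : X × unitInterval → X) : Prop where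
  cont : ContinuousOn c (W ×ˢ univ)
  maps : ∀ w ∈ W, ∀ t, c (w, t) ∈ W
  zero : ∀ w ∈ W, c (w, 0) = w
  one : ∀ w ∈ W, c (w, 1) = x
  fixed : ∀ t, c (x, t) = x

lemma IsContraction.joinedIn {W : Set X} {c : X × unitInterval → X} (hc : IsContraction W x c)
    {w : X} (hw : w ∈ W) : JoinedIn W w x := by
  refine ⟨⟨⟨fun t => c (w, t), ?_⟩, hc.zero w hw, hc.one w hw⟩, hc.maps w hw⟩
  exact hc.cont.comp_continuous (by fun_prop) fun t => ⟨hw, mem_univ t⟩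

lemma LocallyStronglyContractible.exists_isContraction {T : Set X}
    (hT : LocallyStronglyContractible T) (hx : x ∈ T) {N : Set X} (hN : N ∈ 𝓝 x) :
    ∃ O, IsOpen O ∧ x ∈ O ∧ T ∩ O ⊆ N ∧ ∃ c, IsContraction (T ∩ O) x c := by
  obtain ⟨V, hV, hVN, hxV, H, h0, h1, hfix⟩ := hT ⟨x, hx⟩ (Subtype.val ⁻¹' N)
    (continuous_subtype_val.continuousAt.preimage_mem_nhds hN)
  obtain ⟨O, hO, rfl⟩ := isOpen_induced_iff.1 hV
  classical
  refine ⟨O, hO, hxV, fun z hz => hVN (show (⟨z, hz.1⟩ : T) ∈ Subtype.val ⁻¹' O from hz.2),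
    fun q => if h : q.1 ∈ T ∩ O then ((H (⟨⟨q.1, h.1⟩, h.2⟩, q.2) : T) : X) else x,
    ?_, ?_, ?_, ?_, ?_⟩
  · rw [continuousOn_iff_continuous_domRestrict]
    have : Continuous fun q : ((T ∩ O) ×ˢ (univ : Set unitInterval) : Set (X × unitInterval)) =>
        ((H (⟨⟨q.1.1, q.2.1.1⟩, q.2.1.2⟩, q.1.2) : T) : X) := by fun_prop
    refine this.congr fun q => ?_
    have hq : q.1.1 ∈ T ∩ O := q.2.1
    simp [hq.1, hq.2]
  · intro w hw t
    simp only [dif_pos hw]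
    exact ⟨Subtype.coe_prop _, (H (⟨⟨w, hw.1⟩, hw.2⟩, t)).2⟩
  · intro w hw
    simp only [dif_pos hw, h0]
  · intro w hw
    simp only [dif_pos hw, h1]
  · intro t
    have hxO : x ∈ T ∩ O := ⟨hx, hxV⟩
    simp only [dif_pos hxO, hfix]

/-- Contractions of relatively open parts of finitely many closed sets meeting only in `x` can be
glued. -/
lemma exists_glued_contraction {I : Set (Set X)} (hI : I.Finite) (hcl : ∀ T ∈ I, IsClosed T)
    (hinter : ∀ T ∈ I, ∀ S ∈ I, T ≠ S → T ∩ S ⊆ {x}) (W : Set X → Set X)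
    (hW : ∀ T ∈ I, W T ⊆ T) (c : Set X → X × unitInterval → X)
    (hc : ∀ T ∈ I, IsContraction (W T) x (c T)) :
    ∃ C, IsContraction ({x} ∪ ⋃ T ∈ I, W T) x C := by
  classical
  have huniq : ∀ T ∈ I, ∀ S ∈ I, ∀ w, w ≠ x → w ∈ T → w ∈ S → T = S := by
    intro T hT S hS w hwx hwT hwS
    by_contra hne
    exact hwx (hinter T hT S hS hne ⟨hwT, hwS⟩)
  obtain ⟨C, hCx, hCT⟩ : ∃ C : X × unitInterval → X, (∀ t, C (x, t) = x) ∧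
      ∀ T ∈ I, ∀ w ∈ W T, ∀ t, C (w, t) = c T (w, t) := by
    refine ⟨fun q => if h : ∃ T ∈ I, q.1 ∈ T ∧ q.1 ≠ x then c h.choose q else x, fun t => ?_,
      fun T hT w hw t => ?_⟩
    · simp
    · by_cases hwx : w = x
      · subst hwx
        simp [(hc T hT).fixed t]
      · have h : ∃ S ∈ I, w ∈ S ∧ w ≠ x := ⟨T, hT, hW T hT hw, hwx⟩
        have hS := h.choose_spec
        simp only [dif_pos h]
        rw [huniq _ hS.1 T hT w hwx hS.2.1 (hW T hT hw)]
  have hmem : ∀ {w}, w ∈ ({x} ∪ ⋃ T ∈ I, W T) → w = x ∨ ∃ T ∈ I, w ∈ W T := by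
    rintro w (h | h)
    · exact Or.inl h
    · obtain ⟨T, hT, hw⟩ := mem_iUnion₂.1 h
      exact Or.inr ⟨T, hT, hw⟩
  refine ⟨C, ?_, ?_, ?_, ?_, hCx⟩
  · have hset : ({x} ∪ ⋃ T ∈ I, W T) ×ˢ (univ : Set unitInterval) =
        {x} ×ˢ univ ∪ ⋃ T ∈ I, W T ×ˢ univ := by
      rw [union_prod]
      congr 1
      ext ⟨w, t⟩
      simp
    have hglue : ∀ {S T : Set X}, IsClosed S → T ⊆ S → ContinuousOn C (T ×ˢ univ) →
        (S ∩ ({x} ∪ ⋃ T ∈ I, W T) ⊆ T ∪ {x}) → (x ∈ S → x ∈ T) →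
        ∀ q ∈ ({x} ∪ ⋃ T ∈ I, W T) ×ˢ (univ : Set unitInterval),
          ContinuousWithinAt C (T ×ˢ univ) q := by
      intro S T hS hTS hcont hST hx q hq
      by_cases hqT : q.1 ∈ T
      · exact hcont q ⟨hqT, mem_univ _⟩
      · refine continuousWithinAt_of_notMem_closure fun h => hqT ?_
        have hqS : q.1 ∈ S := by
          have := closure_mono (prod_mono_left hTS) h
          rw [(hS.prod isClosed_univ).closure_eq] at this
          exact this.1
        rcases hST ⟨hqS, hq.1⟩ with h | h
        · exact h
        · rw [mem_singleton_iff.1 h] at hqS ⊢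
          exact hx hqS
    intro q hq
    rw [hset]
    refine ContinuousWithinAt.union ?_ ?_
    · refine hglue isClosed_singleton Subset.rfl ?_ (fun z hz => Or.inr hz.1) id q hq
      refine (continuousOn_const (c := x)).congr ?_
      rintro ⟨w, t⟩ ⟨hw, -⟩
      obtain rfl : w = x := hw
      exact hCx t
    · rw [ContinuousWithinAt, nhdsWithin_biUnion hI, tendsto_iSup]
      intro T
      rw [tendsto_iSup]
      intro hT
      have hcT : ContinuousOn C (W T ×ˢ univ) :=
        (hc T hT).cont.congr fun q hq => hCT T hT q.1 hq.1 q.2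
      rcases (W T).eq_empty_or_nonempty with hemp | ⟨w₀, hw₀⟩
      · simp [hemp]
      have hxW : x ∈ W T := by
        rw [← (hc T hT).one w₀ hw₀]
        exact (hc T hT).maps w₀ hw₀ 1
      refine hglue (hcl T hT) (hW T hT) hcT ?_ (fun _ => hxW) q hq
      rintro z ⟨hzT, hz⟩
      rcases hmem hz with rfl | ⟨S, hS, hzS⟩
      · exact Or.inl hxW
      · by_cases hzx : z = x
        · exact Or.inr hzx
        · rw [huniq T hT S hS z hzx hzT (hW S hS hzS)]
          exact Or.inl hzS
  · intro w hw t
    rcases hmem hw with rfl | ⟨T, hT, hwT⟩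
    · rw [hCx]
      exact Or.inl rfl
    · rw [hCT T hT w hwT]
      exact Or.inr (mem_iUnion₂.2 ⟨T, hT, (hc T hT).maps w hwT t⟩)
  · intro w hw
    rcases hmem hw with rfl | ⟨T, hT, hwT⟩
    · exact hCx 0
    · rw [hCT T hT w hwT, (hc T hT).zero w hwT]
  · intro w hw
    rcases hmem hw with rfl | ⟨T, hT, hwT⟩
    · exact hCx 1
    · rw [hCT T hT w hwT, (hc T hT).one w hwT]

/-- A strong deformation retraction onto `V ∩ K` followed by a contraction of `V ∩ K`. -/
lemma exists_contraction_of_retraction {K V : Set X} (hx : x ∈ V) (hxK : x ∈ K)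
    {G C : X × unitInterval → X} (hG : ContinuousOn G (V ×ˢ univ))
    (hGV : ∀ v ∈ V, ∀ t, G (v, t) ∈ V)
    (hG0 : ∀ v ∈ V, G (v, 0) = v) (hG1 : ∀ v ∈ V, G (v, 1) ∈ K)
    (hGK : ∀ v ∈ V ∩ K, ∀ t, G (v, t) = v) (hC : IsContraction (V ∩ K) x C) :
    ∃ H : C(↥V × unitInterval, ↥V),
      (∀ v, H (v, 0) = v) ∧ (∀ v, H (v, 1) = ⟨x, hx⟩) ∧ ∀ t, H (⟨x, hx⟩, t) = ⟨x, hx⟩ := by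
  have hGc : Continuous fun q : unitInterval × V => G (q.2, q.1) :=
    hG.comp_continuous (by fun_prop) fun q => ⟨q.2.2, mem_univ _⟩
  have hr : ∀ v : V, G (v, 1) ∈ V ∩ K := fun v => ⟨hGV v v.2 1, hG1 v v.2⟩
  have hrc : Continuous fun v : V => G (v, 1) :=
    hG.comp_continuous (by fun_prop) fun v => ⟨v.2, mem_univ _⟩
  have hCc : Continuous fun q : unitInterval × V => C (G (q.2, 1), q.1) :=
    hC.cont.comp_continuous ((hrc.comp continuous_snd).prodMk continuous_fst) fun q =>
      ⟨hr q.2, mem_univ _⟩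
  have hxr : ∀ t, G (x, t) = x := hGK x ⟨hx, hxK⟩
  let ρ : C(V, V) := ⟨fun v => ⟨G (v, 1), (hr v).1⟩, hrc.subtype_mk _⟩
  let F₁ : (ContinuousMap.id V).HomotopyRel ρ {⟨x, hx⟩} :=
    { toFun := fun q => ⟨G (q.2, q.1), hGV q.2 q.2.2 q.1⟩
      continuous_toFun := hGc.subtype_mk _
      map_zero_left := fun v => Subtype.ext (hG0 v v.2)
      map_one_left := fun v => rfl
      prop' := fun t v hv => Subtype.ext (by
        rw [mem_singleton_iff.1 hv]
        exact hxr t) }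
  let F₂ : ρ.HomotopyRel (ContinuousMap.const V ⟨x, hx⟩) {⟨x, hx⟩} :=
    { toFun := fun q => ⟨C (G (q.2, 1), q.1), (hC.maps _ (hr q.2) q.1).1⟩
      continuous_toFun := hCc.subtype_mk _
      map_zero_left := fun v => Subtype.ext (hC.zero _ (hr v))
      map_one_left := fun v => Subtype.ext (hC.one _ (hr v))
      prop' := fun t v hv => Subtype.ext (by
        rw [mem_singleton_iff.1 hv]
        change C (G (x, 1), t) = G (x, 1)
        rw [hxr, hC.fixed]) }
  let F := F₁.trans F₂
  exact ⟨⟨fun q => F (q.2, q.1), F.continuous.comp continuous_swap⟩, fun v => F.apply_zero v,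
    fun v => F.apply_one v, fun t => F.eq_fst t rfl⟩

variable [CompactSpace X] [LocallyPathConnectedSpace X]

lemma isClosed_cyclic_star {I : Set (Set X)} (hI : I.Finite)
    (hmax : ∀ T ∈ I, MaximalCyclic T ∧ x ∈ T) : IsClosed ({x} ∪ ⋃₀ I) := by
  rw [sUnion_eq_biUnion]
  exact isClosed_singleton.union (hI.isClosed_biUnion fun T hT => (hmax T hT).1.isClosed)

lemma arc_subset_cyclic_star {I : Set (Set X)} (hI : I.Finite)
    (hmax : ∀ T ∈ I, MaximalCyclic T ∧ x ∈ T) {A : Set X} {a b : X} (hA : IsArc A a b)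
    (ha : a ∈ {x} ∪ ⋃₀ I) (hb : b ∈ {x} ∪ ⋃₀ I) : A ⊆ {x} ∪ ⋃₀ I := by
  intro c hc
  by_contra hcK
  obtain ⟨G, -, d, hd, e, he, hG, hcG, hGi⟩ := hA.exists_gap
    (isClosed_cyclic_star hI hmax) ha hb hc hcK
  have hno : ∀ T ∈ I, d ∈ T → e ∉ T := fun T hT hdT heT =>
    hcK (Or.inr ⟨T, hT, (hmax T hT).1.arc_subset hG hdT heT hcG⟩)
  rcases hd with rfl | ⟨T, hT, hdT⟩
  · rcases he with rfl | ⟨S, hS, heS⟩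
    · exact hG.ne rfl
    · exact hno S hS (hmax S hS).2 heS
  · rcases he with rfl | ⟨S, hS, heS⟩
    · exact hno T hT hdT (hmax T hT).2
    · by_cases hex : e = x
      · exact hno T hT hdT (hex ▸ (hmax T hT).2)
      · obtain ⟨B, hBS, hB⟩ := (hmax S hS).1.2.1.exists_arc heS (hmax S hS).2 hex
        have hGB : IsArc (G ∪ B) d x := hG.join hB fun z hz => by
          rcases hGi ⟨hz.1, Or.inr ⟨S, hS, hBS hz.2⟩⟩ with h | h
          · exact absurd heS (hno S hS (h ▸ hBS hz.2))
          · exact h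
        exact hno T hT hdT ((hmax T hT).1.arc_subset hGB hdT (hmax T hT).2 (Or.inl hG.right_mem))

lemma exists_armSetting_contraction (hfin : {T : Set X | MaximalCyclic T}.Finite)
    (h : ∀ T : Set X, MaximalCyclic T → LocallyStronglyContractible ↥T) {U : Set X} (hU : U ∈ 𝓝 x) :
    ∃ K V, ArmSetting K V ∧ V ⊆ U ∧ x ∈ V ∧ x ∈ K ∧ ∃ C, IsContraction (V ∩ K) x C := by
  set I : Set (Set X) := {T | MaximalCyclic T ∧ x ∈ T} with hIdef
  have hI : I.Finite := hfin.subset fun T hT => hT.1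
  set N : Set X := interior U ∩ ⋂ T ∈ {T : Set X | MaximalCyclic T ∧ x ∉ T}, Tᶜ with hNdef
  have hN : IsOpen N := isOpen_interior.inter
    ((hfin.subset fun T hT => hT.1).isOpen_biInter fun T hT => hT.1.isClosed.isOpen_compl)
  have hxN : x ∈ N := ⟨mem_interior_iff_mem_nhds.2 hU, mem_iInter₂.2 fun T hT => hT.2⟩
  have hex : ∀ T : Set X, ∃ O c, T ∈ I →
      IsOpen O ∧ x ∈ O ∧ T ∩ O ⊆ N ∧ IsContraction (T ∩ O) x c := by
    intro T
    by_cases hT : T ∈ I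
    · obtain ⟨O, hO, hxO, hON, c, hc⟩ := (h T hT.1).exists_isContraction hT.2 (hN.mem_nhds hxN)
      exact ⟨O, c, fun _ => ⟨hO, hxO, hON, hc⟩⟩
    · exact ⟨∅, fun q => q.1, fun h => absurd h hT⟩
  choose O c hOc using hex
  have hinter : ∀ T ∈ I, ∀ S ∈ I, T ≠ S → T ∩ S ⊆ {x} := by
    intro T hT S hS hne z hz
    by_contra hzx
    exact hne (hT.1.eq_of_mem hS.1 hz.1 hT.2 hz.2 hS.2 hzx)
  obtain ⟨C, hC⟩ := exists_glued_contraction hI (fun T hT => hT.1.isClosed) hinter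
    (fun T => T ∩ O T) (fun T _ => inter_subset_left) c (fun T hT => (hOc T hT).2.2.2)
  set P : Set X := N ∩ ⋂ T ∈ I, (T \ O T)ᶜ with hPdef
  have hP : IsOpen P := hN.inter (hI.isOpen_biInter fun T hT =>
    (hT.1.isClosed.sdiff (hOc T hT).1).isOpen_compl)
  have hWP : ∀ T ∈ I, T ∩ O T ⊆ P := by
    refine fun T hT z hz => ⟨(hOc T hT).2.2.1 hz, mem_iInter₂.2 fun S hS hzS => ?_⟩
    by_cases hTS : T = S
    · exact hzS.2 (hTS ▸ hz.2)
    · rw [mem_singleton_iff.1 (hinter T hT S hS hTS ⟨hz.1, hzS.1⟩)] at hzS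
      exact hzS.2 (hOc S hS).2.1
  have hxP : x ∈ P := ⟨hxN, mem_iInter₂.2 fun S hS hzS => hzS.2 (hOc S hS).2.1⟩
  have hVP : pathComponentIn P x ⊆ P := pathComponentIn_subset
  have hxV : x ∈ pathComponentIn P x := mem_pathComponentIn_self hxP
  have hVK : pathComponentIn P x ∩ ({x} ∪ ⋃₀ I) = {x} ∪ ⋃ T ∈ I, T ∩ O T := by
    apply Subset.antisymm
    · rintro z ⟨hzV, hz | ⟨T, hT, hzT⟩⟩
      · exact Or.inl hz
      · refine Or.inr (mem_iUnion₂.2 ⟨T, hT, hzT, ?_⟩)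
        by_contra hzO
        exact mem_iInter₂.1 (hVP hzV).2 T hT ⟨hzT, hzO⟩
    · rintro z (hz | hz)
      · rw [mem_singleton_iff.1 hz]
        exact ⟨hxV, Or.inl rfl⟩
      · obtain ⟨T, hT, hzT⟩ := mem_iUnion₂.1 hz
        exact ⟨((((hOc T hT).2.2.2.joinedIn hzT)).mono (hWP T hT)).symm, Or.inr ⟨T, hT, hzT.1⟩⟩
  refine ⟨{x} ∪ ⋃₀ I, pathComponentIn P x, ?_, ?_, hxV, Or.inl rfl, C, hVK ▸ hC⟩
  · refine ⟨isClosed_cyclic_star hI fun T hT => hT,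
      hP.pathComponentIn x, isPathConnected_pathComponentIn hxP, ⟨x, hxV, Or.inl rfl⟩,
      fun hA ha hb => arc_subset_cyclic_star hI (fun T hT => hT) hA ha hb, fun {J} hJ hJV => ?_⟩
    obtain ⟨y, hy, -⟩ := hJ.exists_ne x
    obtain ⟨T, hJT, hT⟩ := hJ.cyclicallyConnected.exists_maximalCyclic ⟨y, hy⟩
    have hxT : x ∈ T := by
      by_contra hxT
      exact mem_iInter₂.1 (hVP (hJV hy)).1.2 T ⟨hT, hxT⟩ (hJT hy)
    exact fun z hz => Or.inr ⟨T, ⟨hT, hxT⟩, hJT hz⟩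
  · exact fun z hz => interior_subset (hVP hz).1.1

end Contraction

/-- A Peano space with only finitely many maximal cyclic subsets, all of which are
locally strongly contractible, is locally strongly contractible. -/
theorem locallyStronglyContractible_of_maximalCyclic
    (X : Type) [MetricSpace X] [CompactSpace X] [ConnectedSpace X] [LocallyConnectedSpace X]
    (hfin : {T : Set X | MaximalCyclic T}.Finite)
    (h : ∀ T : Set X, MaximalCyclic T → LocallyStronglyContractible ↥T) :
    LocallyStronglyContractible X := by
  intro x U hU
  have : LocallyPathConnectedSpace X := locallyPathConnectedSpace_of_compact
  obtain ⟨K, V, hS, hVU, hxV, hxK, C, hC⟩ := exists_armSetting_contraction hfin h hU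
  obtain ⟨G, hG, hGV, hG0, hG1, hGK⟩ := hS.exists_deformation
  exact ⟨V, hS.isOpen, hVU, hxV, exists_contraction_of_retraction hxV hxK hG hGV hG0 hG1 hGK hC⟩
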